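/- arXiv:1705.01272 — 4 statements merged into one kernel-verified Lean document; each statement's English description precedes it below -/
import Mathlib

section
/- For every odd integer n ≥ 3 there exist a set S of n points in ℝ³ and a family T of at least (n−1)²/4 triangles on S such that for any two distinct triangles in T, the intersection of their convex hulls is either empty, or equal to a single common vertex, or equal to a common edge. Consequently, the maximum size f₂(n,3) of such a family satisfies f₂(n,3) = Θ(n²) as n → ∞. -/
open EuclideanGeometry

noncomputable section

abbrev E3 : Type := EuclideanSpace ℝ (Fin 3)

/-- A triangle on a point set `S` in ℝ³: a 3-element affinely independent subset of `S`. -/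
def IsTriangleOn (S t : Finset E3) : Prop :=
  t ⊆ S ∧ t.card = 3 ∧ AffineIndependent ℝ (fun p : (t : Set E3) => (p : E3))

/-- The convex hulls of `t₁` and `t₂` are disjoint, or intersect in a single common
vertex, or in a common edge. -/
def VertexEdgeIntersect (t₁ t₂ : Finset E3) : Prop :=
  convexHull ℝ (t₁ : Set E3) ∩ convexHull ℝ (t₂ : Set E3) = ∅ ∨
  (∃ v, v ∈ t₁ ∧ v ∈ t₂ ∧
    convexHull ℝ (t₁ : Set E3) ∩ convexHull ℝ (t₂ : Set E3) = {v}) ∨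
  (∃ a b, a ≠ b ∧ a ∈ t₁ ∧ b ∈ t₁ ∧ a ∈ t₂ ∧ b ∈ t₂ ∧
    convexHull ℝ (t₁ : Set E3) ∩ convexHull ℝ (t₂ : Set E3) = segment ℝ a b)

/-- `f₂(n,3)`: the maximum possible number of triangles on `n` points in ℝ³ such that the
convex hulls of any two of them are disjoint, or intersect in a vertex or an edge. -/
noncomputable def f2 (n : ℕ) : ℕ :=
  sSup {m | ∃ (S : Finset E3) (T : Finset (Finset E3)), S.card = n ∧
    (∀ t ∈ T, IsTriangleOn S t) ∧
    (∀ t₁ ∈ T, ∀ t₂ ∈ T, t₁ ≠ t₂ → VertexEdgeIntersect t₁ t₂) ∧ T.card = m}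

def slp (y : ℝ → ℝ) (e : ℝ × ℝ) : ℝ := (y e.2 - y e.1) / (e.2 - e.1)
def hgt (y : ℝ → ℝ) (e : ℝ × ℝ) (x : ℝ) : ℝ := y e.1 + (x - e.1) * slp y e

lemma hgt_left (y : ℝ → ℝ) (e : ℝ × ℝ) : hgt y e e.1 = y e.1 := by simp [hgt]
lemma hgt_right (y : ℝ → ℝ) (e : ℝ × ℝ) (h : e.1 < e.2) : hgt y e e.2 = y e.2 := by
  have : e.2 - e.1 ≠ 0 := by linarith
  simp only [hgt, slp]; field_simp; ring
lemma hgt_right' (y : ℝ → ℝ) (e : ℝ × ℝ) (x : ℝ) (h : e.1 < e.2) :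
    hgt y e x = y e.2 + (x - e.2) * slp y e := by
  have := hgt_right y e h
  rw [← this]; simp only [hgt]; ring

lemma hgt_cross (y : ℝ → ℝ) (e f : ℝ × ℝ) (p q : ℝ) (hpq : p < q)
    (h1 : hgt y e p < hgt y f p) (h2 : hgt y f q < hgt y e q) :
    ∃ x, p < x ∧ x < q ∧ hgt y e x = hgt y f x := by
  have hc : ContinuousOn (fun x => hgt y e x - hgt y f x) (Set.Icc p q) := by
    apply Continuous.continuousOn
    unfold hgt
    fun_prop
  have := intermediate_value_Ioo hpq.le hc
  have h0 : (0:ℝ) ∈ Set.Ioo (hgt y e p - hgt y f p) (hgt y e q - hgt y f q) := ⟨by linarith, by linarith⟩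
  obtain ⟨x, hx, h⟩ := this h0
  exact ⟨x, hx.1, hx.2, by simpa [sub_eq_zero] using h⟩

def sees (y : ℝ → ℝ) (E : Finset (ℝ × ℝ)) (w : ℝ) (e : ℝ × ℝ) : Prop :=
  e.1 < w ∧ w < e.2 ∧ hgt y e w < y w ∧
    ∀ g ∈ E, g ≠ e → g.1 ≤ w → w ≤ g.2 → hgt y e w < hgt y g w → y w ≤ hgt y g w

def NCr (y : ℝ → ℝ) (E : Finset (ℝ × ℝ)) : Prop :=
  ∀ e ∈ E, ∀ f ∈ E, e ≠ f → ∀ x, e.1 ≤ x → x ≤ e.2 → f.1 ≤ x → x ≤ f.2 →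
    hgt y e x = hgt y f x → (x = e.1 ∨ x = e.2) ∧ (x = f.1 ∨ x = f.2)

lemma nc_int {y : ℝ → ℝ} {E : Finset (ℝ × ℝ)} (nc : NCr y E) {e f : ℝ × ℝ} (he : e ∈ E)
    (hf : f ∈ E) (hne : e ≠ f) {x : ℝ} (h1 : e.1 < x) (h2 : x < e.2) (h3 : f.1 ≤ x)
    (h4 : x ≤ f.2) (h : hgt y e x = hgt y f x) : False := by
  rcases (nc e he f hf hne x h1.le h2.le h3 h4 h).1 with h | h <;> linarith

lemma seesL (V : Finset ℝ) (y : ℝ → ℝ) (E : Finset (ℝ × ℝ))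
    (hE : ∀ e ∈ E, e.1 ∈ V ∧ e.2 ∈ V ∧ e.1 < e.2) (nc : NCr y E)
    (e f : ℝ × ℝ) (he : e ∈ E) (hf : f ∈ E) (hfe : f.1 = e.1) (hs : slp y e < slp y f)
    (hmin : ∀ g ∈ E, g.1 = e.1 → slp y e < slp y g → slp y f ≤ slp y g)
    (hlt : f.2 < e.2) : ∃ w ∈ V, sees y E w e := by
  obtain ⟨hf1, hf2, hf12⟩ := hE f hf
  classical
  let W := V.filter fun w => e.1 < w ∧ w ≤ f.2 ∧ hgt y e w < y w ∧ y w ≤ hgt y f w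
  have hW : W.Nonempty := by
    refine ⟨f.2, ?_⟩
    simp only [W, Finset.mem_filter]
    refine ⟨hf2, by linarith, le_rfl, ?_, ?_⟩
    · rw [← hgt_right y f hf12]
      simp only [hgt, hfe]
      have : (f.2 - e.1) * slp y e < (f.2 - e.1) * slp y f :=
        mul_lt_mul_of_pos_left hs (by linarith)
      linarith
    · rw [hgt_right y f hf12]
  obtain ⟨w, hwW, hwmin⟩ := W.exists_min_image id hW
  simp only [W, Finset.mem_filter] at hwW
  obtain ⟨hwV, hw1, hw2, hw3, hw4⟩ := hwW
  refine ⟨w, hwV, hw1, by linarith, hw3, ?_⟩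
  intro g hg hge hg1 hg2 hgt1
  by_contra hlt2
  push Not at hlt2
  have hgf : g ≠ f := by rintro rfl; linarith
  have hef : hgt y e e.1 = hgt y f e.1 := by
    rw [hgt_left, ← hfe, hgt_left]
  by_cases hc : g.1 ≤ e.1
  · rcases lt_trichotomy (hgt y g e.1) (hgt y e e.1) with h | h | h
    · obtain ⟨x, hx1, hx2, hx⟩ := hgt_cross y g e e.1 w hw1 h hgt1
      exact nc_int nc he hg hge.symm hx1 (by linarith) (by linarith) (by linarith) hx.symm
    · have := (nc g hg e he hge e.1 hc (by linarith) le_rfl (by linarith) h).1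
      have h1 : g.1 = e.1 := by
        rcases this with h | h
        · exact h.symm
        · linarith
      have h2 : slp y e < slp y g := by
        simp only [hgt, h1] at hgt1
        by_contra hh
        push Not at hh
        have := mul_le_mul_of_nonneg_left hh (show 0 ≤ w - e.1 by linarith)
        linarith
      have h3 := hmin g hg h1 h2
      have h4 := mul_le_mul_of_nonneg_left h3 (show 0 ≤ w - e.1 by linarith)
      simp only [hgt, hfe] at hw4
      simp only [hgt, h1] at hlt2
      linarith
    · obtain ⟨x, hx1, hx2, hx⟩ := hgt_cross y f g e.1 w hw1 (by linarith) (by linarith)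
      exact nc_int nc hf hg hgf.symm (by linarith) (by linarith) (by linarith) (by linarith) hx
  · push Not at hc
    have hcy := hgt_left y g
    have hcw : g.1 < w := by
      rcases hg1.lt_or_eq with h | h
      · exact h
      · rw [← h] at hlt2; linarith
    have h1 : hgt y e g.1 < y g.1 := by
      by_contra hh
      push Not at hh
      rcases hh.lt_or_eq with h | h
      · obtain ⟨x, hx1, hx2, hx⟩ := hgt_cross y g e g.1 w hcw (by linarith) hgt1
        exact nc_int nc he hg hge.symm (by linarith) (by linarith) (by linarith) (by linarith) hx.symm
      · exact nc_int nc he hg hge.symm (x := g.1) (by linarith) (by linarith) (by linarith) (by linarith) (by linarith)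
    have h2 : y g.1 ≤ hgt y f g.1 := by
      by_contra hh
      push Not at hh
      obtain ⟨x, hx1, hx2, hx⟩ := hgt_cross y f g g.1 w hcw (by linarith) (by linarith)
      exact nc_int nc hf hg hgf.symm (by linarith) (by linarith) (by linarith) (by linarith) hx
    have := hwmin g.1 (by
      simp only [W, Finset.mem_filter]
      exact ⟨(hE g hg).1, hc, by linarith, h1, h2⟩)
    simp only [id] at this
    linarith

lemma seesR (V : Finset ℝ) (y : ℝ → ℝ) (E : Finset (ℝ × ℝ))
    (hE : ∀ e ∈ E, e.1 ∈ V ∧ e.2 ∈ V ∧ e.1 < e.2) (nc : NCr y E)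
    (e f : ℝ × ℝ) (he : e ∈ E) (hf : f ∈ E) (hfe : f.2 = e.2) (hs : slp y f < slp y e)
    (hmin : ∀ g ∈ E, g.2 = e.2 → slp y g < slp y e → slp y g ≤ slp y f)
    (hlt : e.1 < f.1) : ∃ w ∈ V, sees y E w e := by
  obtain ⟨hf1, hf2, hf12⟩ := hE f hf
  have he12 := (hE e he).2.2
  classical
  let W := V.filter fun w => w < e.2 ∧ f.1 ≤ w ∧ hgt y e w < y w ∧ y w ≤ hgt y f w
  have hW : W.Nonempty := by
    refine ⟨f.1, ?_⟩
    simp only [W, Finset.mem_filter]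
    refine ⟨hf1, by linarith, le_rfl, ?_, ?_⟩
    · rw [← hgt_left y f]
      rw [hgt_right' y e _ he12, hgt_right' y f _ hf12, hfe]
      have : (e.2 - f.1) * slp y f < (e.2 - f.1) * slp y e :=
        mul_lt_mul_of_pos_left hs (by linarith)
      linarith
    · rw [hgt_left y f]
  obtain ⟨w, hwW, hwmin⟩ := W.exists_max_image id hW
  simp only [W, Finset.mem_filter] at hwW
  obtain ⟨hwV, hw1, hw2, hw3, hw4⟩ := hwW
  refine ⟨w, hwV, by linarith, hw1, hw3, ?_⟩
  intro g hg hge hg1 hg2 hgt1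
  have hg12 := (hE g hg).2.2
  by_contra hlt2
  push Not at hlt2
  have hgf : g ≠ f := by rintro rfl; linarith
  have hef : hgt y e e.2 = hgt y f e.2 := by
    rw [hgt_right y e he12, ← hfe, hgt_right y f hf12]
  by_cases hc : e.2 ≤ g.2
  · rcases lt_trichotomy (hgt y g e.2) (hgt y e e.2) with h | h | h
    · obtain ⟨x, hx1, hx2, hx⟩ := hgt_cross y e g w e.2 hw1 hgt1 h
      exact nc_int nc he hg hge.symm (by linarith) (by linarith) (by linarith) (by linarith) hx
    · have := (nc g hg e he hge e.2 (by linarith) hc (by linarith) le_rfl h).1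
      have h1 : g.2 = e.2 := by
        rcases this with h | h
        · linarith
        · exact h.symm
      rw [hgt_right' y e _ he12, hgt_right' y g _ hg12, h1] at hgt1
      rw [hgt_right' y f _ hf12, hfe] at hw4
      rw [hgt_right' y g _ hg12, h1] at hlt2
      have h2 : slp y g < slp y e := by
        by_contra hh
        push Not at hh
        have := mul_le_mul_of_nonneg_left hh (show 0 ≤ e.2 - w by linarith)
        linarith
      have h3 := hmin g hg h1 h2
      have h4 := mul_le_mul_of_nonneg_left h3 (show 0 ≤ e.2 - w by linarith)
      linarith
    · obtain ⟨x, hx1, hx2, hx⟩ := hgt_cross y g f w e.2 hw1 (by linarith) (by linarith)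
      exact nc_int nc hf hg hgf.symm (by linarith) (by linarith) (by linarith) (by linarith) hx.symm
  · push Not at hc
    have hcy := hgt_right y g hg12
    have hcw : w < g.2 := by
      rcases hg2.lt_or_eq with h | h
      · exact h
      · rw [h] at hlt2; linarith
    have h1 : hgt y e g.2 < y g.2 := by
      by_contra hh
      push Not at hh
      rcases hh.lt_or_eq with h | h
      · obtain ⟨x, hx1, hx2, hx⟩ := hgt_cross y e g w g.2 hcw hgt1 (by linarith)
        exact nc_int nc he hg hge.symm (by linarith) (by linarith) (by linarith) (by linarith) hx
      · exact nc_int nc he hg hge.symm (x := g.2) (by linarith) (by linarith) (by linarith) (by linarith) (by linarith)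
    have h2 : y g.2 ≤ hgt y f g.2 := by
      by_contra hh
      push Not at hh
      obtain ⟨x, hx1, hx2, hx⟩ := hgt_cross y g f w g.2 hcw (by linarith) (by linarith)
      exact nc_int nc hf hg hgf.symm (by linarith) (by linarith) (by linarith) (by linarith) hx.symm
    have := hwmin g.2 (by
      simp only [W, Finset.mem_filter]
      exact ⟨(hE g hg).2.1, hc, by linarith, h1, h2⟩)
    simp only [id] at this
    linarith

lemma planar_bound (V : Finset ℝ) (y : ℝ → ℝ) (E : Finset (ℝ × ℝ))
    (hE : ∀ e ∈ E, e.1 ∈ V ∧ e.2 ∈ V ∧ e.1 < e.2) (nc : NCr y E) :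
    E.card ≤ 3 * V.card := by
  classical
  let A := E.filter fun e => ∀ f ∈ E, f.1 = e.1 → slp y f ≤ slp y e
  let B := E.filter fun e => ∀ f ∈ E, f.2 = e.2 → slp y e ≤ slp y f
  let C := E.filter fun e => ∃ w ∈ V, sees y E w e
  have hA : A.card ≤ V.card := by
    apply Finset.card_le_card_of_injOn (fun e => e.1)
    · intro e he
      simp only [A, Finset.coe_filter, Set.mem_ofPred_eq] at he
      exact (hE e he.1).1
    · intro e he e' he' h
      simp only [A, Finset.coe_filter, Set.mem_ofPred_eq] at he he' h
      by_contra hne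
      have hs : slp y e = slp y e' := le_antisymm (he'.2 e he.1 h) (he.2 e' he'.1 h.symm)
      have h1 := (hE e he.1).2.2
      have h2 := (hE e' he'.1).2.2
      have hx : e.1 < min e.2 e'.2 := by simp [h1]; linarith
      have := nc e he.1 e' he'.1 hne (min e.2 e'.2) hx.le (min_le_left _ _) (h ▸ hx.le) (min_le_right _ _)
        (by simp only [hgt, hs, h])
      have a1 : min e.2 e'.2 = e.2 := by rcases this.1 with h | h <;> linarith
      have a2 : min e.2 e'.2 = e'.2 := by rcases this.2 with h | h <;> linarith
      exact hne (Prod.ext h (a1.symm.trans a2))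
  have hB : B.card ≤ V.card := by
    apply Finset.card_le_card_of_injOn (fun e => e.2)
    · intro e he
      simp only [B, Finset.coe_filter, Set.mem_ofPred_eq] at he
      exact (hE e he.1).2.1
    · intro e he e' he' h
      simp only [B, Finset.coe_filter, Set.mem_ofPred_eq] at he he' h
      by_contra hne
      have hs : slp y e = slp y e' := le_antisymm (he.2 e' he'.1 h.symm) (he'.2 e he.1 h)
      have h1 := (hE e he.1).2.2
      have h2 := (hE e' he'.1).2.2
      have hx : max e.1 e'.1 < e.2 := by simp [h1]; linarith
      have := nc e he.1 e' he'.1 hne (max e.1 e'.1) (le_max_left _ _) hx.le (le_max_right _ _) (h ▸ hx.le)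
        (by rw [hgt_right' y e _ h1, hgt_right' y e' _ h2, hs, h])
      have a1 : max e.1 e'.1 = e.1 := by rcases this.1 with h | h <;> linarith
      have a2 : max e.1 e'.1 = e'.1 := by rcases this.2 with h | h <;> linarith
      exact hne (Prod.ext (a1.symm.trans a2) h)
  have hC : C.card ≤ V.card := by
    have : ∀ e ∈ C, ∃ w ∈ V, sees y E w e := fun e he => (Finset.mem_filter.1 he).2
    choose! φ hφ1 hφ2 using this
    apply Finset.card_le_card_of_injOn φ
    · intro e he
      exact hφ1 e he
    · intro e he e' he' h
      by_contra hne
      have s1 := hφ2 e he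
      have s2 := hφ2 e' he'
      rw [← h] at s2
      have me := (Finset.mem_filter.1 he).1
      have me' := (Finset.mem_filter.1 he').1
      obtain ⟨a1, a2, a3, a4⟩ := s1
      obtain ⟨b1, b2, b3, b4⟩ := s2
      rcases lt_trichotomy (hgt y e (φ e)) (hgt y e' (φ e)) with h | h | h
      · have := a4 e' me' (Ne.symm hne) b1.le b2.le h
        linarith
      · exact nc_int nc me me' hne a1 a2 b1.le b2.le h
      · have := b4 e me hne a1.le a2.le h
        linarith
  have hsub : E ⊆ A ∪ B ∪ C := by
    intro e he
    by_contra hn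
    simp only [Finset.mem_union, not_or, A, B, C, Finset.mem_filter, he, true_and] at hn
    obtain ⟨⟨nA, nB⟩, nC⟩ := hn
    push Not at nA nB
    have he12 := (hE e he).2.2
    obtain ⟨f, hf, hfmin⟩ := (E.filter fun f => f.1 = e.1 ∧ slp y e < slp y f).exists_min_image (slp y)
      (by obtain ⟨f, h1, h2, h3⟩ := nA; exact ⟨f, Finset.mem_filter.2 ⟨h1, h2, h3⟩⟩)
    obtain ⟨g, hg, hgmin⟩ := (E.filter fun f => f.2 = e.2 ∧ slp y f < slp y e).exists_max_image (slp y)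
      (by obtain ⟨f, h1, h2, h3⟩ := nB; exact ⟨f, Finset.mem_filter.2 ⟨h1, h2, h3⟩⟩)
    simp only [Finset.mem_filter] at hf hg hfmin hgmin
    obtain ⟨hf, hfe, hfs⟩ := hf
    obtain ⟨hg, hge, hgs⟩ := hg
    have c1 : e.2 ≤ f.2 := by
      by_contra hh
      exact nC (seesL V y E hE nc e f he hf hfe hfs (fun g a b c => hfmin g ⟨a, b, c⟩) (not_le.1 hh))
    have c2 : g.1 ≤ e.1 := by
      by_contra hh
      exact nC (seesR V y E hE nc e g he hg hge hgs (fun g a b c => hgmin g ⟨a, b, c⟩) (not_le.1 hh))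
    have hg12 := (hE g hg).2.2
    have k1 : hgt y f e.1 < hgt y g e.1 := by
      rw [← hfe, hgt_left, hfe, ← hgt_left y e, hgt_right' y e _ he12, hgt_right' y g _ hg12, hge]
      have := mul_lt_mul_of_pos_left hgs (show 0 < e.2 - e.1 by linarith)
      linarith
    have k2 : hgt y g e.2 < hgt y f e.2 := by
      rw [← hge, hgt_right y g hg12, hge, ← hgt_right y e he12]
      simp only [hgt, hfe]
      have := mul_lt_mul_of_pos_left hfs (show 0 < e.2 - e.1 by linarith)
      linarith
    obtain ⟨x, hx1, hx2, hx⟩ := hgt_cross y f g e.1 e.2 he12 k1 k2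
    refine nc_int nc hf hg ?_ (by linarith) (by linarith) (by linarith) (by linarith) hx
    rintro rfl
    linarith
  have := Finset.card_le_card hsub
  have h1 := Finset.card_union_le (A ∪ B) C
  have h2 := Finset.card_union_le A B
  omega
def pA (i : ℕ) : E3 := !₂[(i : ℝ), 0, 0]
def pB (j : ℕ) : E3 := !₂[0, (j : ℝ), 1]

@[simp] lemma pA0 (i : ℕ) : pA i 0 = i := by simp [pA]
@[simp] lemma pA1 (i : ℕ) : pA i 1 = 0 := by simp [pA]
@[simp] lemma pA2 (i : ℕ) : pA i 2 = 0 := by simp [pA]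
@[simp] lemma pB0 (i : ℕ) : pB i 0 = 0 := by simp [pB]
@[simp] lemma pB1 (i : ℕ) : pB i 1 = i := by simp [pB]
@[simp] lemma pB2 (i : ℕ) : pB i 2 = 1 := by simp [pB]

lemma pA_inj {i j : ℕ} (h : pA i = pA j) : i = j := by
  have := congrArg (fun p : E3 => p 0) h
  simpa using this
lemma pB_inj {i j : ℕ} (h : pB i = pB j) : i = j := by
  have := congrArg (fun p : E3 => p 1) h
  simpa using this
lemma pA_ne_pB {i j : ℕ} (h : pA i = pB j) : False := by
  have := congrArg (fun p : E3 => p 2) h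
  simp at this

open Classical in
def tri (i j : ℕ) : Finset E3 := {pA i, pA (i+1), pB j}

lemma tri_inj {i j i' j' : ℕ} (h : tri i j = tri i' j') : i = i' ∧ j = j' := by
  have h1 : pB j ∈ tri i' j' := h ▸ (by simp [tri])
  have h2 : pA i ∈ tri i' j' := h ▸ (by simp [tri])
  have h3 : pA (i+1) ∈ tri i' j' := h ▸ (by simp [tri])
  simp only [tri, Finset.mem_insert, Finset.mem_singleton] at h1 h2 h3
  have k1 : j = j' := by
    rcases h1 with h | h | h
    · exact (pA_ne_pB h.symm).elim
    · exact (pA_ne_pB h.symm).elim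
    · exact pB_inj h
  have k2 : i = i' ∨ i = i' + 1 := by
    rcases h2 with h | h | h
    · exact Or.inl (pA_inj h)
    · exact Or.inr (pA_inj h)
    · exact (pA_ne_pB h).elim
  have k3 : i + 1 = i' ∨ i + 1 = i' + 1 := by
    rcases h3 with h | h | h
    · exact Or.inl (pA_inj h)
    · exact Or.inr (pA_inj h)
    · exact (pA_ne_pB h).elim
  omega

lemma tri_hull {i j : ℕ} {p : E3} (hp : p ∈ convexHull ℝ (tri i j : Set E3)) :
    p 1 = j * p 2 ∧ 0 ≤ p 2 ∧ p 2 ≤ 1 ∧ i * (1 - p 2) ≤ p 0 ∧ p 0 ≤ (i + 1) * (1 - p 2) := by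
  have hsub : convexHull ℝ (tri i j : Set E3) ⊆ {p : E3 | p 1 = j * p 2 ∧ 0 ≤ p 2 ∧ p 2 ≤ 1 ∧
      i * (1 - p 2) ≤ p 0 ∧ p 0 ≤ (i + 1) * (1 - p 2)} := by
    apply convexHull_min
    · intro q hq
      simp only [tri, Finset.coe_insert, Finset.coe_singleton, Set.mem_insert_iff,
        Set.mem_singleton_iff] at hq
      rcases hq with rfl | rfl | rfl <;> simp
    · intro q hq r hr a b ha hb hab
      obtain ⟨q1, q2, q3, q4, q5⟩ := hq
      obtain ⟨r1, r2, r3, r4, r5⟩ := hr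
      have hb' : b = 1 - a := by linarith
      subst hb'
      simp only [Set.mem_ofPred_eq, PiLp.add_apply, PiLp.smul_apply, smul_eq_mul]
      refine ⟨by rw [q1, r1]; ring, by positivity, by nlinarith, by nlinarith, by nlinarith⟩
  exact hsub hp

lemma E3_ext {p q : E3} (h0 : p 0 = q 0) (h1 : p 1 = q 1) (h2 : p 2 = q 2) : p = q := by
  ext k
  fin_cases k <;> assumption

lemma vei_symm {s t : Finset E3} (h : VertexEdgeIntersect s t) : VertexEdgeIntersect t s := by
  unfold VertexEdgeIntersect at *
  rw [Set.inter_comm]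
  rcases h with h | ⟨v, h1, h2, h3⟩ | ⟨a, b, h1, h2, h3, h4, h5, h6⟩
  · exact Or.inl h
  · exact Or.inr (Or.inl ⟨v, h2, h1, h3⟩)
  · exact Or.inr (Or.inr ⟨a, b, h1, h4, h5, h2, h3, h6⟩)

lemma vei_vertex {s t : Finset E3} {v : E3} (h1 : v ∈ s) (h2 : v ∈ t)
    (h : ∀ p ∈ convexHull ℝ (s : Set E3), p ∈ convexHull ℝ (t : Set E3) → p = v) :
    VertexEdgeIntersect s t := by
  refine Or.inr (Or.inl ⟨v, h1, h2, Set.Subset.antisymm (fun p hp => h p hp.1 hp.2) ?_⟩)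
  rintro _ rfl
  exact ⟨subset_convexHull _ _ h1, subset_convexHull _ _ h2⟩

lemma vei_edge {s t : Finset E3} {a b : E3} (hab : a ≠ b) (h1 : a ∈ s) (h2 : b ∈ s)
    (h3 : a ∈ t) (h4 : b ∈ t)
    (h : ∀ p ∈ convexHull ℝ (s : Set E3), p ∈ convexHull ℝ (t : Set E3) → p ∈ segment ℝ a b) :
    VertexEdgeIntersect s t := by
  refine Or.inr (Or.inr ⟨a, b, hab, h1, h2, h3, h4,
    Set.Subset.antisymm (fun p hp => h p hp.1 hp.2) ?_⟩)
  intro p hp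
  exact ⟨(convex_convexHull ℝ _).segment_subset (subset_convexHull _ _ h1) (subset_convexHull _ _ h2) hp,
    (convex_convexHull ℝ _).segment_subset (subset_convexHull _ _ h3) (subset_convexHull _ _ h4) hp⟩

lemma tri_vei_le {i j i' j' : ℕ} (hne : ¬ (i = i' ∧ j = j')) (hle : i ≤ i') :
    VertexEdgeIntersect (tri i j) (tri i' j') := by
  by_cases hj : j = j'
  · subst hj
    have hlt : i + 1 ≤ i' := by
      rcases hle.lt_or_eq with h | h
      · exact h
      · exact (hne ⟨h, rfl⟩).elim
    by_cases hi : i' = i + 1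
    · subst hi
      refine vei_edge (a := pA (i+1)) (b := pB j) (fun h => pA_ne_pB h) (by simp [tri])
        (by simp [tri]) (by simp [tri]) (by simp [tri]) ?_
      intro p hp hq
      obtain ⟨p1, p2, p3, p4, p5⟩ := tri_hull hp
      obtain ⟨q1, q2, q3, q4, q5⟩ := tri_hull hq
      push_cast at q4
      refine ⟨1 - p 2, p 2, by linarith, p2, by ring, ?_⟩
      apply E3_ext
      · simp; linarith
      · simp; linarith
      · simp
    · refine vei_vertex (v := pB j) (by simp [tri]) (by simp [tri]) ?_
      intro p hp hq
      obtain ⟨p1, p2, p3, p4, p5⟩ := tri_hull hp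
      obtain ⟨q1, q2, q3, q4, q5⟩ := tri_hull hq
      have hc : (i : ℝ) + 2 ≤ i' := by exact_mod_cast (by omega : i + 2 ≤ i')
      have h2 : p 2 = 1 := by nlinarith
      have h0 : p 0 = 0 := by rw [h2] at p4 p5; linarith
      apply E3_ext <;> simp [*]
  · have hz : ∀ p ∈ convexHull ℝ (tri i j : Set E3), p ∈ convexHull ℝ (tri i' j' : Set E3) →
        p 1 = 0 ∧ p 2 = 0 ∧ i ≤ p 0 ∧ p 0 ≤ i + 1 ∧ i' ≤ p 0 := by
      intro p hp hq
      obtain ⟨p1, p2, p3, p4, p5⟩ := tri_hull hp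
      obtain ⟨q1, q2, q3, q4, q5⟩ := tri_hull hq
      have h2 : p 2 = 0 := by
        have hjj : (j : ℝ) - j' ≠ 0 := by
          rw [sub_ne_zero]; exact_mod_cast hj
        have : ((j : ℝ) - j') * p 2 = 0 := by linarith
        exact (mul_eq_zero.1 this).resolve_left hjj
      rw [h2] at p1 p4 p5 q4
      exact ⟨by linarith, h2, by linarith, by linarith, by linarith⟩
    by_cases hi : i = i'
    · subst hi
      refine vei_edge (a := pA i) (b := pA (i+1)) (fun h => by have := pA_inj h; omega) (by simp [tri])
        (by simp [tri]) (by simp [tri]) (by simp [tri]) ?_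
      intro p hp hq
      obtain ⟨h1, h2, h3, h4, h5⟩ := hz p hp hq
      refine ⟨i + 1 - p 0, p 0 - i, by linarith, by linarith, by ring, ?_⟩
      apply E3_ext
      · simp; ring
      · simp [h1]
      · simp [h2]
    · by_cases hi2 : i' = i + 1
      · subst hi2
        refine vei_vertex (v := pA (i+1)) (by simp [tri]) (by simp [tri]) ?_
        intro p hp hq
        obtain ⟨h1, h2, h3, h4, h5⟩ := hz p hp hq
        push_cast at h5
        apply E3_ext
        · simp; linarith
        · simp [h1]
        · simp [h2]
      · left
        rw [Set.eq_empty_iff_forall_notMem]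
        rintro p ⟨hp, hq⟩
        obtain ⟨h1, h2, h3, h4, h5⟩ := hz p hp hq
        have hc : (i : ℝ) + 2 ≤ i' := by exact_mod_cast (by omega : i + 2 ≤ i')
        linarith

lemma tri_vei {i j i' j' : ℕ} (hne : ¬ (i = i' ∧ j = j')) :
    VertexEdgeIntersect (tri i j) (tri i' j') := by
  rcases le_total i i' with h | h
  · exact tri_vei_le hne h
  · exact vei_symm (tri_vei_le (fun hh => hne ⟨hh.1.symm, hh.2.symm⟩) h)

lemma tri_card (i j : ℕ) : (tri i j).card = 3 := by
  unfold tri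
  rw [Finset.card_eq_three]
  refine ⟨_, _, _, ?_, ?_, ?_, rfl⟩
  · intro h; have := pA_inj h; omega
  · exact fun h => pA_ne_pB h
  · exact fun h => pA_ne_pB h

lemma tri_indep (i j : ℕ) : AffineIndependent ℝ (fun p : (tri i j : Set E3) => (p : E3)) := by
  have h : AffineIndependent ℝ ![pA i, pA (i+1), pB j] := by
    rw [affineIndependent_iff_not_collinear_set, collinear_iff_of_mem (p₀ := pA i) (by simp)]
    rintro ⟨d, hd⟩
    obtain ⟨r, hr⟩ := hd (pA (i+1)) (by simp)
    obtain ⟨s, hs⟩ := hd (pB j) (by simp)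
    have r0 := congrArg (fun p : E3 => p 0) hr
    have r2 := congrArg (fun p : E3 => p 2) hr
    have s2 := congrArg (fun p : E3 => p 2) hs
    simp at r0 r2 s2
    rcases r2 with h | h
    · simp [h] at r0
    · simp [h] at s2
  have h2 := h.range
  have : Set.range ![pA i, pA (i+1), pB j] = (tri i j : Set E3) := by
    ext p
    simp [tri]
    tauto
  rwa [this] at h2

lemma lower (n m : ℕ) (h : 2 * m + 1 ≤ n) : ∃ (S : Finset E3) (T : Finset (Finset E3)),
      S.card = n ∧ (∀ t ∈ T, IsTriangleOn S t) ∧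
      (∀ t₁ ∈ T, ∀ t₂ ∈ T, t₁ ≠ t₂ → VertexEdgeIntersect t₁ t₂) ∧ T.card = m ^ 2 := by
  classical
  let S0 : Finset E3 := (Finset.range (m+1)).image pA ∪ (Finset.range m).image pB
  have hS0 : S0.card ≤ n := by
    have h1 := Finset.card_union_le ((Finset.range (m+1)).image pA) ((Finset.range m).image pB)
    have h2 := Finset.card_image_le (s := Finset.range (m+1)) (f := pA)
    have h3 := Finset.card_image_le (s := Finset.range m) (f := pB)
    simp only [Finset.card_range] at h2 h3
    simp only [S0]
    omega
  obtain ⟨S, hS, hSc⟩ := Infinite.exists_superset_card_eq S0 n hS0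
  refine ⟨S, (Finset.range m ×ˢ Finset.range m).image (fun q => tri q.1 q.2), hSc, ?_, ?_, ?_⟩
  · intro t ht
    simp only [Finset.mem_image, Finset.mem_product, Finset.mem_range] at ht
    obtain ⟨⟨i, j⟩, ⟨hi, hj⟩, rfl⟩ := ht
    refine ⟨?_, tri_card i j, tri_indep i j⟩
    refine Finset.Subset.trans ?_ hS
    intro p hp
    simp only [tri, Finset.mem_insert, Finset.mem_singleton] at hp
    simp only [S0, Finset.mem_union, Finset.mem_image, Finset.mem_range]
    simp only at hi hj
    rcases hp with rfl | rfl | rfl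
    · exact Or.inl ⟨i, by omega, rfl⟩
    · exact Or.inl ⟨i+1, by omega, rfl⟩
    · exact Or.inr ⟨j, by omega, rfl⟩
  · intro t ht t' ht' hne
    simp only [Finset.mem_image] at ht ht'
    obtain ⟨q, -, rfl⟩ := ht
    obtain ⟨q', -, rfl⟩ := ht'
    apply tri_vei
    rintro ⟨h1, h2⟩
    exact hne (by rw [h1, h2])
  · rw [Finset.card_image_of_injective]
    · simp [sq]
    · intro q q' h
      have := tri_inj h
      exact Prod.ext this.1 this.2
def LL (t : ℝ) : E3 →ₗ[ℝ] ℝ where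
  toFun p := p 0 + t * p 1 + t ^ 2 * p 2
  map_add' p q := by simp; ring
  map_smul' c p := by simp; ring

lemma LL_apply (t : ℝ) (p : E3) : LL t p = p 0 + t * p 1 + t ^ 2 * p 2 := rfl

lemma LL_finite (d : E3) (hd : d ≠ 0) : {t : ℝ | LL t d = 0}.Finite := by
  classical
  let P : Polynomial ℝ := Polynomial.C (d 0) + Polynomial.C (d 1) * Polynomial.X
    + Polynomial.C (d 2) * Polynomial.X ^ 2
  have hP : P ≠ 0 := by
    intro h
    apply hd
    have h0 := congrArg (fun q => Polynomial.coeff q 0) h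
    have h1 := congrArg (fun q => Polynomial.coeff q 1) h
    have h2 := congrArg (fun q => Polynomial.coeff q 2) h
    simp [P, Polynomial.coeff_X, Polynomial.coeff_C] at h0 h1 h2
    apply E3_ext <;> simp [*]
  apply (P.roots.toFinset.finite_toSet).subset
  intro t ht
  simp only [Finset.mem_coe, Multiset.mem_toFinset, Polynomial.mem_roots hP, Polynomial.IsRoot.def]
  have ht' : d 0 + t * d 1 + t ^ 2 * d 2 = 0 := ht
  simp [P]
  linarith

lemma LL_generic (D : Finset E3) (F : Finset ℝ) :
    ∃ s, s ∉ F ∧ ∀ d ∈ D, LL s d = 0 → d = 0 := by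
  classical
  have hfin : ((F : Set ℝ) ∪ ⋃ d ∈ D.filter (· ≠ 0), {t : ℝ | LL t d = 0}).Finite := by
    apply F.finite_toSet.union
    apply Set.Finite.biUnion (Finset.finite_toSet _)
    intro d hd
    exact LL_finite d (by simpa using (Finset.mem_filter.1 hd).2)
  obtain ⟨s, hs⟩ := hfin.infinite_compl.nonempty
  refine ⟨s, fun h => hs (Or.inl h), fun d hd h => ?_⟩
  by_contra hne
  apply hs
  right
  simp only [Set.mem_iUnion]
  exact ⟨d, Finset.mem_filter.2 ⟨hd, hne⟩, h⟩

lemma LL_inj {s t r : ℝ} (h1 : s ≠ t) (h2 : r ≠ s) (h3 : r ≠ t) {p q : E3}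
    (ht : LL t p = LL t q) (hs : LL s p = LL s q) (hr : LL r p = LL r q) : p = q := by
  simp only [LL_apply] at ht hs hr
  have e1 : (p 1 - q 1) + (s + t) * (p 2 - q 2) = 0 := by
    have : (s - t) * ((p 1 - q 1) + (s + t) * (p 2 - q 2)) = 0 := by linarith
    exact (mul_eq_zero.1 this).resolve_left (sub_ne_zero.2 h1)
  have e2 : (p 1 - q 1) + (r + t) * (p 2 - q 2) = 0 := by
    have : (r - t) * ((p 1 - q 1) + (r + t) * (p 2 - q 2)) = 0 := by linarith
    exact (mul_eq_zero.1 this).resolve_left (sub_ne_zero.2 h3)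
  have e3 : p 2 - q 2 = 0 := by
    have : (r - s) * (p 2 - q 2) = 0 := by linarith
    exact (mul_eq_zero.1 this).resolve_left (sub_ne_zero.2 h2)
  rw [e3] at e1
  have z2 : p 2 = q 2 := by linarith
  have z1 : p 1 = q 1 := by linarith
  rw [z1, z2] at ht
  exact E3_ext (by linarith) z1 z2

/-- central projection coordinates -/
def prj (t s : ℝ) (v a : E3) : ℝ := LL s (a - v) / LL t (a - v)

lemma hull_mem {τ : Finset E3} {v a b : E3} (hv : v ∈ τ) (ha : a ∈ τ) (hb : b ∈ τ) {α β : ℝ}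
    (h1 : 0 ≤ α) (h2 : 0 ≤ β) (h3 : α + β ≤ 1) :
    v + (α • (a - v) + β • (b - v)) ∈ convexHull ℝ (τ : Set E3) := by
  have hc := convex_convexHull ℝ (τ : Set E3)
  have := hc.sum_mem (t := Finset.univ) (w := ![1 - α - β, α, β]) (z := ![v, a, b])
    (by intro i _; fin_cases i <;> simp <;> linarith)
    (by simp [Fin.sum_univ_three]; ring)
    (by intro i _; fin_cases i <;> simp <;> apply subset_convexHull <;> assumption)
  convert this using 1
  simp [Fin.sum_univ_three]
  module

lemma hgt_prj (y : ℝ → ℝ) (e : ℝ × ℝ) (x : ℝ) (h : e.1 < e.2) :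
    ∃ σ, σ = (x - e.1) / (e.2 - e.1) ∧ x = (1 - σ) * e.1 + σ * e.2 ∧
      hgt y e x = (1 - σ) * y e.1 + σ * y e.2 := by
  have : e.2 - e.1 ≠ 0 := by linarith
  refine ⟨_, rfl, ?_, ?_⟩
  · field_simp; ring
  · simp only [hgt, slp]; field_simp; ring

/-- a point over the edge in both triangles -/
lemma core {t s r : ℝ} (hst : s ≠ t) (hrs : r ≠ s) (hrt : r ≠ t) {v a b a' b' : E3}
    {τ τ' : Finset E3} (hτ : ∀ p, p ∈ τ ↔ p = v ∨ p = a ∨ p = b)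
    (hτ' : ∀ p, p ∈ τ' ↔ p = v ∨ p = a' ∨ p = b') (hne : τ ≠ τ')
    (hvei : VertexEdgeIntersect τ τ')
    (ha : 0 < LL t (a - v)) (hb : 0 < LL t (b - v))
    (ha' : 0 < LL t (a' - v)) (hb' : 0 < LL t (b' - v))
    {σ σ' : ℝ} (h0 : 0 ≤ σ) (h1 : σ ≤ 1) (h0' : 0 ≤ σ') (h1' : σ' ≤ 1)
    (hX : (1 - σ) * prj t s v a + σ * prj t s v b = (1 - σ') * prj t s v a' + σ' * prj t s v b')
    (hY : (1 - σ) * prj t r v a + σ * prj t r v b = (1 - σ') * prj t r v a' + σ' * prj t r v b') :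
    ∃ p, (p = a ∨ p = b) ∧ (p = a' ∨ p = b') ∧
      prj t s v p = (1 - σ) * prj t s v a + σ * prj t s v b := by
  set P : E3 := ((1 - σ) / LL t (a - v)) • (a - v) + (σ / LL t (b - v)) • (b - v) with hP
  set P' : E3 := ((1 - σ') / LL t (a' - v)) • (a' - v) + (σ' / LL t (b' - v)) • (b' - v) with hP'
  have hPs : ∀ u, LL u P = (1 - σ) * prj t u v a + σ * prj t u v b := by
    intro u
    simp only [hP, map_add, map_smul, smul_eq_mul, prj]; ring
  have hPs' : ∀ u, LL u P' = (1 - σ') * prj t u v a' + σ' * prj t u v b' := by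
    intro u
    simp only [hP', map_add, map_smul, smul_eq_mul, prj]; ring
  have hPt : LL t P = 1 := by
    rw [hPs]; simp only [prj]; rw [div_self ha.ne', div_self hb.ne']; ring
  have hPt' : LL t P' = 1 := by
    rw [hPs']; simp only [prj]; rw [div_self ha'.ne', div_self hb'.ne']; ring
  have hPP : P = P' := by
    apply LL_inj hst hrs hrt
    · rw [hPt, hPt']
    · rw [hPs, hPs', hX]
    · rw [hPs, hPs', hY]
  obtain ⟨ε, hε, e1, e2, e3, e4⟩ : ∃ ε : ℝ, 0 < ε ∧ ε ≤ LL t (a - v) ∧ ε ≤ LL t (b - v) ∧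
      ε ≤ LL t (a' - v) ∧ ε ≤ LL t (b' - v) := by
    refine ⟨min (min (LL t (a - v)) (LL t (b - v))) (min (LL t (a' - v)) (LL t (b' - v))), ?_, ?_, ?_, ?_, ?_⟩
    · simp only [lt_min_iff]; exact ⟨⟨ha, hb⟩, ha', hb'⟩
    all_goals simp
  have key : ∀ (x c : ℝ), 0 ≤ x → 0 < c → ε ≤ c → 0 ≤ ε * (x / c) ∧ ε * (x / c) ≤ x := by
    intro x c hx hc hec
    refine ⟨by positivity, ?_⟩
    rw [← mul_div_assoc, div_le_iff₀ hc]
    nlinarith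
  have m1 : v + ε • P ∈ convexHull ℝ (τ : Set E3) := by
    have k1 := key (1 - σ) _ (by linarith) ha e1
    have k2 := key σ _ h0 hb e2
    have := hull_mem (τ := τ) ((hτ v).2 (by simp)) ((hτ a).2 (by simp)) ((hτ b).2 (by simp))
      k1.1 k2.1 (by linarith)
    convert this using 2
    rw [hP, smul_add, smul_smul, smul_smul]
  have m2 : v + ε • P ∈ convexHull ℝ (τ' : Set E3) := by
    have k1 := key (1 - σ') _ (by linarith) ha' e3
    have k2 := key σ' _ h0' hb' e4
    have := hull_mem (τ := τ') ((hτ' v).2 (by simp)) ((hτ' a').2 (by simp)) ((hτ' b').2 (by simp))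
      k1.1 k2.1 (by linarith)
    convert this using 2
    rw [hPP, hP', smul_add, smul_smul, smul_smul]
  have v1 : v ∈ convexHull ℝ (τ : Set E3) := subset_convexHull _ _ ((hτ v).2 (by simp))
  have v2 : v ∈ convexHull ℝ (τ' : Set E3) := subset_convexHull _ _ ((hτ' v).2 (by simp))
  have fin : ∀ q, q ≠ v → q ∈ τ → q ∈ τ' → v + ε • P ∈ segment ℝ v q →
      ∃ p, (p = a ∨ p = b) ∧ (p = a' ∨ p = b') ∧
      prj t s v p = (1 - σ) * prj t s v a + σ * prj t s v b := by
    intro q hqv hq hq' hseg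
    refine ⟨q, ((hτ q).1 hq).resolve_left hqv, ((hτ' q).1 hq').resolve_left hqv, ?_⟩
    rw [segment_eq_image'] at hseg
    obtain ⟨θ, -, hθ⟩ := hseg
    have hθ' : θ • (q - v) = ε • P := add_left_cancel hθ
    have a1 := congrArg (LL t) hθ'
    have a2 := congrArg (LL s) hθ'
    simp only [map_smul, smul_eq_mul, hPt] at a1 a2
    rw [← hPs]
    have hq0 : LL t (q - v) ≠ 0 := by
      intro h; rw [h] at a1; linarith
    simp only [prj]
    rw [div_eq_iff hq0]
    have hθ0 : θ ≠ 0 := by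
      rintro rfl; linarith
    apply mul_left_cancel₀ hθ0
    rw [a2]; linear_combination (-(LL s P)) * a1
  have pos : ∀ q ∈ τ, q ≠ v → 0 < LL t (q - v) := by
    intro q hq hqv
    rcases ((hτ q).1 hq).resolve_left hqv with rfl | rfl <;> assumption
  rcases hvei with h | ⟨w, hw1, hw2, h⟩ | ⟨p, q, hpq, p1, q1, p2, q2, h⟩
  · have : v ∈ (∅ : Set E3) := h ▸ ⟨v1, v2⟩
    exact this.elim
  · have a1 : v ∈ ({w} : Set E3) := h ▸ ⟨v1, v2⟩
    have a2 : v + ε • P ∈ ({w} : Set E3) := h ▸ ⟨m1, m2⟩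
    have a3 : ε • P = 0 := by
      rw [Set.mem_singleton_iff] at a1 a2
      rw [← a1] at a2
      simpa using a2
    have := congrArg (LL t) a3
    simp [hPt] at this
    linarith
  · have a1 : v ∈ segment ℝ p q := h ▸ ⟨v1, v2⟩
    have a2 : v + ε • P ∈ segment ℝ p q := h ▸ ⟨m1, m2⟩
    by_cases hp : p = v
    · subst hp
      exact fin q hpq.symm q1 q2 a2
    by_cases hq : q = v
    · subst hq
      rw [segment_symm] at a2
      exact fin p hpq p1 p2 a2
    exfalso
    have b1 := pos p p1 hp
    have b2 := pos q q1 hq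
    obtain ⟨x, z, hx, hz, hxz, hh⟩ := a1
    have : x • (p - v) + z • (q - v) = 0 := by
      have hv : v = (x + z) • v := by rw [hxz, one_smul]
      rw [smul_sub, smul_sub, sub_add_sub_comm, hh, ← add_smul, ← hv, sub_self]
    have h2 := congrArg (LL t) this
    simp only [map_add, map_smul, smul_eq_mul, map_zero] at h2
    rcases hx.lt_or_eq with h | h
    · have := mul_pos h b1
      have := mul_nonneg hz b2.le
      linarith
    · have : z = 1 := by linarith
      rw [← h, this] at h2
      linarith

set_option maxHeartbeats 1000000 in
lemma star_bound (S : Finset E3) (T : Finset (Finset E3))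
    (hT : ∀ t ∈ T, IsTriangleOn S t)
    (hV : ∀ t₁ ∈ T, ∀ t₂ ∈ T, t₁ ≠ t₂ → VertexEdgeIntersect t₁ t₂)
    (t : ℝ) (ht : ∀ a ∈ S, ∀ b ∈ S, LL t a = LL t b → a = b) (v : E3) (hv : v ∈ S)
    (Tv : Finset (Finset E3))
    (hTv : ∀ τ ∈ Tv, τ ∈ T ∧ v ∈ τ ∧ ∀ w ∈ τ, LL t v ≤ LL t w) :
    Tv.card ≤ 3 * S.card := by
  classical
  obtain ⟨s, hst, hs⟩ := LL_generic ((S ×ˢ S).image fun q : E3 × E3 =>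
    LL t (q.2 - v) • (q.1 - v) - LL t (q.1 - v) • (q.2 - v)) {t}
  obtain ⟨r, hr, -⟩ := LL_generic ∅ {s, t}
  simp only [Finset.mem_singleton, Finset.mem_insert, not_or] at hst hr
  obtain ⟨hrs, hrt⟩ := hr
  have hs' : ∀ a ∈ S, ∀ b ∈ S, 0 < LL t (a - v) → 0 < LL t (b - v) →
      prj t s v a = prj t s v b → LL t (b - v) • (a - v) = LL t (a - v) • (b - v) := by
    intro a ha b hb pa pb h
    rw [← sub_eq_zero]
    apply hs
    · exact Finset.mem_image.2 ⟨(a, b), Finset.mem_product.2 ⟨ha, hb⟩, rfl⟩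
    · simp only [prj] at h
      rw [div_eq_div_iff pa.ne' pb.ne'] at h
      rw [map_sub, map_smul, map_smul, smul_eq_mul, smul_eq_mul]
      linarith
  have hY : ∀ a ∈ S, ∀ b ∈ S, 0 < LL t (a - v) → 0 < LL t (b - v) →
      prj t s v a = prj t s v b → prj t r v a = prj t r v b := by
    intro a ha b hb pa pb h
    have := congrArg (LL r) (hs' a ha b hb pa pb h)
    simp only [map_smul, smul_eq_mul] at this
    simp only [prj]
    rw [div_eq_div_iff pa.ne' pb.ne']
    linarith
  have hex : ∀ τ ∈ Tv, ∃ a b, (∀ p, p ∈ τ ↔ p = v ∨ p = a ∨ p = b) ∧ a ∈ S ∧ b ∈ S ∧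
      0 < LL t (a - v) ∧ 0 < LL t (b - v) ∧ prj t s v a < prj t s v b := by
    intro τ hτ
    obtain ⟨hτT, hvτ, hmin⟩ := hTv τ hτ
    obtain ⟨hsub, hcard, hind⟩ := hT τ hτT
    have h2 : (τ.erase v).card = 2 := by rw [Finset.card_erase_of_mem hvτ, hcard]
    obtain ⟨a, b, hab, he⟩ := Finset.card_eq_two.1 h2
    have hm : ∀ p, p ∈ τ ↔ p = v ∨ p = a ∨ p = b := by
      intro p
      rw [← Finset.insert_erase hvτ, he]
      simp
    have hav : a ≠ v := (Finset.mem_erase.1 (he ▸ (by simp) : a ∈ τ.erase v)).1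
    have hbv : b ≠ v := (Finset.mem_erase.1 (he ▸ (by simp) : b ∈ τ.erase v)).1
    have haτ : a ∈ τ := (hm a).2 (by simp)
    have hbτ : b ∈ τ := (hm b).2 (by simp)
    have pos : ∀ p ∈ τ, p ≠ v → 0 < LL t (p - v) := by
      intro p hp hpv
      rw [map_sub, sub_pos]
      refine lt_of_le_of_ne (hmin p hp) fun h => hpv (ht p (hsub hp) v hv h.symm)
    have pa := pos a haτ hav
    have pb := pos b hbτ hbv
    have hne : prj t s v a ≠ prj t s v b := by
      intro h
      have hh := hs' a (hsub haτ) b (hsub hbτ) pa pb h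
      let φ : Fin 3 ↪ (τ : Set E3) := ⟨fun i => ⟨![v, a, b] i, by
        fin_cases i
        · exact hvτ
        · exact haτ
        · exact hbτ⟩, by
        intro i j hij
        have := congrArg Subtype.val hij
        clear hs' hY hmin pos hh h hs hind hm he ht hT hV hTv
        fin_cases i <;> fin_cases j <;>
          simp [hab, hav, hbv, hab.symm, hav.symm, hbv.symm] at this ⊢⟩
      have h3 := hind.comp_embedding φ
      have h4 : AffineIndependent ℝ ![v, a, b] := h3
      rw [affineIndependent_iff_not_collinear_set] at h4
      apply h4
      rw [collinear_iff_of_mem (p₀ := v) (by simp)]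
      refine ⟨a - v, ?_⟩
      intro p hp
      simp only [Set.mem_insert_iff, Set.mem_singleton_iff] at hp
      rcases hp with rfl | rfl | rfl
      · exact ⟨0, by simp⟩
      · exact ⟨1, by simp⟩
      · refine ⟨LL t (p - v) / LL t (a - v), ?_⟩
        rw [div_eq_inv_mul, mul_smul, hh, smul_smul, inv_mul_cancel₀ pa.ne']
        simp
    rcases lt_or_gt_of_ne hne with h | h
    · exact ⟨a, b, hm, hsub haτ, hsub hbτ, pa, pb, h⟩
    · exact ⟨b, a, fun p => by rw [hm p]; tauto, hsub hbτ, hsub haτ, pb, pa, h⟩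
  choose! α β hm hαS hβS hα hβ hlt using hex
  obtain ⟨y, hy⟩ : ∃ y : ℝ → ℝ, ∀ a ∈ S, 0 < LL t (a - v) → y (prj t s v a) = prj t r v a := by
    refine ⟨fun x => if h : ∃ a ∈ S, 0 < LL t (a - v) ∧ prj t s v a = x then
      prj t r v h.choose else 0, ?_⟩
    intro a ha pa
    have h : ∃ a' ∈ S, 0 < LL t (a' - v) ∧ prj t s v a' = prj t s v a := ⟨a, ha, pa, rfl⟩
    simp only [dif_pos h]
    have := h.choose_spec
    exact hY _ this.1 _ ha this.2.1 pa this.2.2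
  let ed : Finset E3 → ℝ × ℝ := fun τ => (prj t s v (α τ), prj t s v (β τ))
  have hed : ∀ τ ∈ Tv, (ed τ).1 < (ed τ).2 := hlt
  have core' : ∀ τ ∈ Tv, ∀ τ' ∈ Tv, τ ≠ τ' → ∀ x, (ed τ).1 ≤ x → x ≤ (ed τ).2 →
      (ed τ').1 ≤ x → x ≤ (ed τ').2 → hgt y (ed τ) x = hgt y (ed τ') x →
      (x = (ed τ).1 ∨ x = (ed τ).2) ∧ (x = (ed τ').1 ∨ x = (ed τ').2) := by
    intro τ hτ τ' hτ' hne x x1 x2 x3 x4 hx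
    obtain ⟨σ, s1, s2, s3⟩ := hgt_prj y (ed τ) x (hed τ hτ)
    obtain ⟨σ', s1', s2', s3'⟩ := hgt_prj y (ed τ') x (hed τ' hτ')
    have p1 := hed τ hτ
    have p1' := hed τ' hτ'
    have y1 : y (ed τ).1 = prj t r v (α τ) := hy _ (hαS τ hτ) (hα τ hτ)
    have y2 : y (ed τ).2 = prj t r v (β τ) := hy _ (hβS τ hτ) (hβ τ hτ)
    have y1' : y (ed τ').1 = prj t r v (α τ') := hy _ (hαS τ' hτ') (hα τ' hτ')
    have y2' : y (ed τ').2 = prj t r v (β τ') := hy _ (hβS τ' hτ') (hβ τ' hτ')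
    obtain ⟨p, q1, q2, q3⟩ := core (σ := σ) (σ' := σ') hst hrs hrt (hm τ hτ) (hm τ' hτ') hne
      (hV τ (hTv τ hτ).1 τ' (hTv τ' hτ').1 hne) (hα τ hτ) (hβ τ hτ) (hα τ' hτ') (hβ τ' hτ')
      (by rw [s1]; exact div_nonneg (by linarith) (by linarith))
      (by rw [s1]; exact (div_le_one (by linarith)).2 (by linarith))
      (by rw [s1']; exact div_nonneg (by linarith) (by linarith))
      (by rw [s1']; exact (div_le_one (by linarith)).2 (by linarith))
      (s2.symm.trans s2')
      (by rw [← y1, ← y2, ← y1', ← y2', ← s3, ← s3', hx])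
    have hxp : x = prj t s v p := s2.trans q3.symm
    rw [hxp]
    constructor
    · rcases q1 with rfl | rfl
      · exact Or.inl rfl
      · exact Or.inr rfl
    · rcases q2 with h | h
      · exact Or.inl (by rw [h])
      · exact Or.inr (by rw [h])
  have hinj : Set.InjOn ed (Tv : Set (Finset E3)) := by
    intro τ hτ τ' hτ' h
    by_contra hne
    have p1 := hed τ hτ
    have := (core' τ hτ τ' hτ' hne (((ed τ).1 + (ed τ).2) / 2) (by linarith) (by linarith)
      (by rw [← h]; linarith) (by rw [← h]; linarith) (by rw [h])).1
    rcases this with h | h <;> linarith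
  have hb := planar_bound (S.image (prj t s v)) y (Tv.image ed) (by
    intro e he
    obtain ⟨τ, hτ, rfl⟩ := Finset.mem_image.1 he
    exact ⟨Finset.mem_image_of_mem _ (hαS τ hτ), Finset.mem_image_of_mem _ (hβS τ hτ), hed τ hτ⟩) (by
    intro e he f hf hne
    obtain ⟨τ, hτ, rfl⟩ := Finset.mem_image.1 he
    obtain ⟨τ', hτ', rfl⟩ := Finset.mem_image.1 hf
    exact core' τ hτ τ' hτ' (fun h => hne (by rw [h])))
  rw [Finset.card_image_of_injOn hinj] at hb
  have := Finset.card_image_le (s := S) (f := prj t s v)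
  omega

lemma upper (S : Finset E3) (T : Finset (Finset E3))
    (hT : ∀ t ∈ T, IsTriangleOn S t)
    (hV : ∀ t₁ ∈ T, ∀ t₂ ∈ T, t₁ ≠ t₂ → VertexEdgeIntersect t₁ t₂) :
    T.card ≤ 3 * S.card ^ 2 := by
  classical
  obtain ⟨t, -, ht⟩ := LL_generic ((S ×ˢ S).image fun q : E3 × E3 => q.1 - q.2) ∅
  have ht' : ∀ a ∈ S, ∀ b ∈ S, LL t a = LL t b → a = b := by
    intro a ha b hb h
    rw [← sub_eq_zero]
    apply ht
    · exact Finset.mem_image.2 ⟨(a, b), Finset.mem_product.2 ⟨ha, hb⟩, rfl⟩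
    · rw [map_sub, h, sub_self]
  have hsub : T ⊆ S.biUnion fun v => T.filter fun τ => v ∈ τ ∧ ∀ w ∈ τ, LL t v ≤ LL t w := by
    intro τ hτ
    obtain ⟨h1, h2, -⟩ := hT τ hτ
    obtain ⟨v, hv, hmin⟩ := τ.exists_min_image (LL t) (Finset.card_pos.1 (by omega))
    exact Finset.mem_biUnion.2 ⟨v, h1 hv, Finset.mem_filter.2 ⟨hτ, hv, hmin⟩⟩
  calc T.card ≤ _ := Finset.card_le_card hsub
    _ ≤ S.card * (3 * S.card) := Finset.card_biUnion_le_card_mul _ _ _ (fun v hv =>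
        star_bound S T hT hV t ht' v hv _ (fun τ hτ => Finset.mem_filter.1 hτ))
    _ = 3 * S.card ^ 2 := by ring

theorem stmt2 :
    (∀ n : ℕ, 3 ≤ n → Odd n → ∃ (S : Finset E3) (T : Finset (Finset E3)),
      S.card = n ∧ (∀ t ∈ T, IsTriangleOn S t) ∧
      (∀ t₁ ∈ T, ∀ t₂ ∈ T, t₁ ≠ t₂ → VertexEdgeIntersect t₁ t₂) ∧
      ((n : ℝ) - 1) ^ 2 / 4 ≤ (T.card : ℝ)) ∧
    (∃ c₁ c₂ : ℝ, 0 < c₁ ∧ 0 < c₂ ∧ ∃ N : ℕ, ∀ n : ℕ, N ≤ n →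
      c₁ * (n : ℝ) ^ 2 ≤ (f2 n : ℝ) ∧ (f2 n : ℝ) ≤ c₂ * (n : ℝ) ^ 2) := by
  constructor
  · rintro n - ⟨m, rfl⟩
    obtain ⟨S, T, h1, h2, h3, h4⟩ := lower (2 * m + 1) m le_rfl
    refine ⟨S, T, h1, h2, h3, ?_⟩
    rw [h4]
    push_cast
    apply le_of_eq
    ring
  · refine ⟨1 / 16, 3, by norm_num, by norm_num, 4, fun n hn => ?_⟩
    have hub : ∀ k ∈ {m | ∃ (S : Finset E3) (T : Finset (Finset E3)), S.card = n ∧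
        (∀ t ∈ T, IsTriangleOn S t) ∧
        (∀ t₁ ∈ T, ∀ t₂ ∈ T, t₁ ≠ t₂ → VertexEdgeIntersect t₁ t₂) ∧ T.card = m},
        k ≤ 3 * n ^ 2 := by
      rintro k ⟨S, T, rfl, h2, h3, rfl⟩
      exact upper S T h2 h3
    have hlow := lower n ((n - 1) / 2) (by omega)
    have h1 : ((n - 1) / 2) ^ 2 ≤ f2 n := le_csSup ⟨_, hub⟩ hlow
    have h2 : f2 n ≤ 3 * n ^ 2 := csSup_le ⟨_, hlow⟩ hub
    constructor
    · have h3 : n ≤ 4 * ((n - 1) / 2) := by omega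
      have h3' : (n : ℝ) ≤ 4 * (((n - 1) / 2 : ℕ) : ℝ) := by exact_mod_cast h3
      have h1' : (((n - 1) / 2 : ℕ) : ℝ) ^ 2 ≤ f2 n := by exact_mod_cast h1
      have := pow_le_pow_left₀ (by positivity) h3' 2
      nlinarith
    · exact_mod_cast h2
end
end

section
/- For every even integer n ≥ 4 there exist a set S of n points in ℝ³ and a family of at least (n² − 2n)/8 quadrilaterals (4-gons) on S such that no two of these quadrilaterals intersect badly. Consequently, the maximum number f₃(n,4) of 4-gons on n points in ℝ³ without bad intersections satisfies f₃(n,4) = Ω(n²). -/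
open EuclideanGeometry

noncomputable section

attribute [local instance] Classical.propDecidable

/-- A `k`-gon in ℝ³: a set of `k` coplanar points in convex position. -/
def IsKGon (k : ℕ) (P : Finset E3) : Prop :=
  P.card = k ∧ Coplanar ℝ (P : Set E3) ∧
    ∀ p ∈ P, p ∉ convexHull ℝ ((P.erase p) : Set E3)

/-- A `k`-gon on a point set `S`. -/
def IsKGonOn (k : ℕ) (S P : Finset E3) : Prop :=
  P ⊆ S ∧ IsKGon k P

/-- Two polygons (given by their vertex sets) intersect badly if the intersection of their
convex hulls contains a common vertex and also a point in the relative interior of each. -/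
def IntersectBadly (P Q : Finset E3) : Prop :=
  (∃ v, v ∈ P ∧ v ∈ Q ∧
    v ∈ convexHull ℝ (P : Set E3) ∩ convexHull ℝ (Q : Set E3)) ∧
  (∃ x, x ∈ convexHull ℝ (P : Set E3) ∩ convexHull ℝ (Q : Set E3) ∧
    x ∈ intrinsicInterior ℝ (convexHull ℝ (P : Set E3)) ∧
    x ∈ intrinsicInterior ℝ (convexHull ℝ (Q : Set E3)))

/-- `f₃(n,k)`: the maximum possible number of `k`-gons on `n` points in ℝ³ without
bad intersections. -/
noncomputable def f3 (n k : ℕ) : ℕ :=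
  sSup {m | ∃ (S : Finset E3) (T : Finset (Finset E3)), S.card = n ∧
    (∀ P ∈ T, IsKGonOn k S P) ∧
    (∀ P ∈ T, ∀ Q ∈ T, P ≠ Q → ¬ IntersectBadly P Q) ∧ T.card = m}

def LF (a b c : ℝ) : E3 →ₗ[ℝ] ℝ where
  toFun p := a * p 0 + b * p 1 + c * p 2
  map_add' x y := by simp; ring
  map_smul' r x := by simp; ring

theorem LF_apply (a b c : ℝ) (p : E3) : LF a b c p = a * p 0 + b * p 1 + c * p 2 := rfl

theorem hull_le (f : E3 →ₗ[ℝ] ℝ) (s : Set E3) (d : ℝ) (h : ∀ p ∈ s, f p ≤ d) :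
    ∀ p ∈ convexHull ℝ s, f p ≤ d := fun p hp =>
  convexHull_min (t := {w | f w ≤ d}) h (convex_halfSpace_le f.isLinear d) hp

theorem relint_eq (f : E3 →ₗ[ℝ] ℝ) (C : Set E3) (d : ℝ) (h : ∀ p ∈ C, f p ≤ d) (x : E3)
    (hx : x ∈ intrinsicInterior ℝ C) (hfx : f x = d) : ∀ y ∈ C, f y = d := by
  intro y hy
  obtain ⟨x', hx', rfl⟩ := mem_intrinsicInterior.1 hx
  have hyA : y ∈ affineSpan ℝ C := subset_affineSpan ℝ C hy
  let g : ℝ → affineSpan ℝ C := fun t =>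
    ⟨AffineMap.lineMap (x' : E3) y t, AffineMap.lineMap_mem t x'.2 hyA⟩
  have hg : Continuous g := by
    apply Continuous.subtype_mk
    exact AffineMap.lineMap_continuous
  have hg0 : g 0 = x' := by
    apply Subtype.ext
    simp [g]
  have hn : interior (((↑) : affineSpan ℝ C → E3) ⁻¹' C) ∈ nhds (g 0) := by
    rw [hg0]; exact isOpen_interior.mem_nhds hx'
  have := hg.continuousAt.preimage_mem_nhds hn
  obtain ⟨ε, hε, hb⟩ := Metric.mem_nhds_iff.1 this
  have hm : (-(ε/2)) ∈ Metric.ball (0:ℝ) ε := by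
    simp [abs_of_pos hε]; linarith
  have h1 : ((g (-(ε/2)) : affineSpan ℝ C) : E3) ∈ C := by
    have h0 := interior_subset (s := ((↑) : affineSpan ℝ C → E3) ⁻¹' C) (hb hm)
    exact h0
  have h2 := h _ h1
  have h3 := h y hy
  have h4 : f ((g (-(ε/2)) : affineSpan ℝ C) : E3) = (-(ε/2)) * (f y - f x') + f x' := by
    simp [g, AffineMap.lineMap_apply]
  rw [h4, hfx] at h2
  nlinarith

def pt (q : ℕ × ℕ) : E3 := !₂[(q.1 : ℝ), (q.1 : ℝ)^2, (q.2 : ℝ)]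

theorem pt_inj : Function.Injective pt := by
  rintro ⟨a, b⟩ ⟨c, d⟩ h
  have h0 := congrArg (fun p : E3 => p 0) h
  have h2 := congrArg (fun p : E3 => p 2) h
  simp [pt] at h0 h2
  simp [h0, h2]

def poly (e : Finset ℕ) : Finset E3 := (e ×ˢ Finset.range 2).map ⟨pt, pt_inj⟩

theorem mem_poly (e : Finset ℕ) (p : E3) : p ∈ poly e ↔ ∃ i ∈ e, p = pt (i, 0) ∨ p = pt (i, 1) := by
  simp only [poly, Finset.mem_map, Finset.mem_product, Finset.mem_range, Function.Embedding.coeFn_mk]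
  constructor
  · rintro ⟨⟨i, h⟩, ⟨hi, hh⟩, rfl⟩
    refine ⟨i, hi, ?_⟩
    simp only at hh
    interval_cases h <;> simp
  · rintro ⟨i, hi, rfl | rfl⟩
    · exact ⟨(i, 0), ⟨hi, by simp⟩, rfl⟩
    · exact ⟨(i, 1), ⟨hi, by simp⟩, rfl⟩

theorem LF_pt (a b c : ℝ) (i h : ℕ) : LF a b c (pt (i, h)) = a * i + b * i^2 + c * h := by
  simp [LF_apply, pt]

theorem poly_mono {e e' : Finset ℕ} (h : e ⊆ e') : poly e ⊆ poly e' := by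
  intro p; rw [mem_poly, mem_poly]; rintro ⟨i, hi, hp⟩; exact ⟨i, h hi, hp⟩

theorem poly_card (e : Finset ℕ) : (poly e).card = 2 * e.card := by
  simp [poly, mul_comm]

theorem poly_inj : Function.Injective poly := by
  intro e e' h
  ext i
  have key : ∀ e, i ∈ e ↔ pt (i, 0) ∈ poly e := by
    intro e
    rw [mem_poly]
    constructor
    · intro hi; exact ⟨i, hi, Or.inl rfl⟩
    · rintro ⟨j, hj, h | h⟩ <;> have := pt_inj h <;> simp at this
      rwa [this]
  rw [key, key, h]

theorem coplanar_poly (i j : ℕ) : Coplanar ℝ (poly {i, j} : Set E3) := by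
  have hs : (poly {i, j} : Set E3) ⊆
      (({pt (j,1), pt (i,0), pt (i,1), pt (j,0)} : Set E3)) := by
    intro p hp
    rw [Finset.mem_coe, mem_poly] at hp
    obtain ⟨k, hk, h⟩ := hp
    simp at hk ⊢
    rcases hk with rfl | rfl <;> tauto
  refine Coplanar.subset hs ?_
  rw [coplanar_insert_iff_of_mem_affineSpan]
  · exact coplanar_triple ℝ _ _ _
  · have h2 : pt (j,1) = (1:ℝ) • (pt (i,1) -ᵥ pt (i,0)) +ᵥ pt (j,0) := by
      ext k; fin_cases k <;> simp [pt]
    rw [h2]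
    apply AffineSubspace.smul_vsub_vadd_mem <;> apply subset_affineSpan <;> simp

theorem pos_aux (i j h : ℕ) (hij : i ≠ j) (hh : h = 0 ∨ h = 1) :
    pt (i,h) ∉ convexHull ℝ (((poly {i, j}).erase (pt (i,h)) : Finset E3) : Set E3) := by
  intro hm
  have hd : (0:ℝ) < ((i:ℝ) - j)^2 := by
    have : (i:ℝ) - j ≠ 0 := sub_ne_zero.2 (by exact_mod_cast hij)
    positivity
  have := hull_le (LF ((i:ℝ) - j) 0 (((i:ℝ)-j)^2 * (2 * h - 1))) _
    (((i:ℝ) - j) * j + ((i:ℝ)-j)^2 * h) ?_ _ hm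
  · rw [LF_pt] at this
    rcases hh with rfl | rfl <;> simp at this <;> nlinarith
  · intro p hp
    rw [Finset.mem_coe, Finset.mem_erase, mem_poly] at hp
    obtain ⟨hne, k, hk, h'⟩ := hp
    simp at hk
    rcases hk with rfl | rfl <;> rcases h' with rfl | rfl <;> rcases hh with rfl | rfl <;>
      simp only [ne_eq, not_true_eq_false] at hne <;> rw [LF_pt] <;> push_cast <;> nlinarith

theorem kgon_poly (e : Finset ℕ) (he : e.card = 2) : IsKGon 4 (poly e) := by
  refine ⟨by rw [poly_card, he], ?_, ?_⟩
  · obtain ⟨i, j, hij, rfl⟩ := Finset.card_eq_two.1 he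
    exact coplanar_poly i j
  · intro p hp
    obtain ⟨i, hi, h⟩ := (mem_poly _ _).1 hp
    obtain ⟨j, hij, rfl⟩ : ∃ j, i ≠ j ∧ e = {i, j} := by
      obtain ⟨a, b, hab, rfl⟩ := Finset.card_eq_two.1 he
      simp at hi
      rcases hi with rfl | rfl
      · exact ⟨b, hab, rfl⟩
      · exact ⟨a, hab.symm, Finset.pair_comm _ _⟩
    rcases h with rfl | rfl
    · convert pos_aux i j 0 hij (by simp)
    · convert pos_aux i j 1 hij (by simp)

theorem not_bad (i j k : ℕ) (hik : i ≠ k) (hjk : j ≠ k) :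
    ¬ IntersectBadly (poly {i, j}) (poly {i, k}) := by
  rintro ⟨-, x, ⟨hxP, hxQ⟩, -, hx⟩
  obtain ⟨s, hs⟩ : ∃ s : ℝ, 0 < s * (((k:ℝ) - i) * (k - j)) := by
    refine ⟨((k:ℝ) - i) * (k - j), ?_⟩
    have h1 : (k:ℝ) - i ≠ 0 := sub_ne_zero.2 (by exact_mod_cast hik.symm)
    have h2 : (k:ℝ) - j ≠ 0 := sub_ne_zero.2 (by exact_mod_cast hjk.symm)
    exact mul_self_pos.2 (mul_ne_zero h1 h2)
  -- f = -s (y - (i+j) x) ≤ s i j on Q, with equality on P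
  have hP : ∀ p ∈ poly {i, j}, LF (s * (i + j)) (-s) 0 p = s * (i * j) := by
    intro p hp
    obtain ⟨l, hl, h⟩ := (mem_poly _ _).1 hp
    simp at hl
    rcases hl with rfl | rfl <;> rcases h with rfl | rfl <;> rw [LF_pt] <;> ring
  have hQ : ∀ p ∈ poly {i, k}, LF (s * (i + j)) (-s) 0 p ≤ s * (i * j) := by
    intro p hp
    obtain ⟨l, hl, h⟩ := (mem_poly _ _).1 hp
    simp at hl
    rcases hl with rfl | rfl <;> rcases h with rfl | rfl <;> rw [LF_pt] <;> nlinarith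
  have e1 : LF (s * (i + j)) (-s) 0 x ≤ s * (i * j) :=
    hull_le _ _ _ (fun p hp => (hP p hp).le) x hxP
  have e2 := hull_le (-LF (s * (i + j)) (-s) 0) _ (-(s * (i * j)))
    (fun p hp => by rw [LinearMap.neg_apply, hP p hp]) x hxP
  rw [LinearMap.neg_apply] at e2
  have := relint_eq _ _ _ (hull_le _ _ _ hQ) x hx (by linarith) (pt (k,0))
    (subset_convexHull ℝ _ ((mem_poly _ _).2 ⟨k, by simp, Or.inl rfl⟩))
  rw [LF_pt] at this
  nlinarith

theorem not_bad' (e e' : Finset ℕ) (he : e.card = 2) (he' : e'.card = 2) (hne : e ≠ e') :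
    ¬ IntersectBadly (poly e) (poly e') := by
  intro hb
  obtain ⟨v, hv, hv', -⟩ := hb.1
  obtain ⟨i, hi, hi'⟩ : ∃ i, i ∈ e ∧ i ∈ e' := by
    obtain ⟨i, hi, h⟩ := (mem_poly _ _).1 hv
    obtain ⟨i', hi', h'⟩ := (mem_poly _ _).1 hv'
    refine ⟨i, hi, ?_⟩
    have : i = i' := by
      rcases h with rfl | rfl <;> rcases h' with h' | h' <;> have := pt_inj h' <;> simp at this <;> exact this
    rwa [this]
  have aux : ∀ e : Finset ℕ, e.card = 2 → i ∈ e → ∃ j, i ≠ j ∧ e = {i, j} := by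
    intro e he hi
    obtain ⟨a, b, hab, rfl⟩ := Finset.card_eq_two.1 he
    simp at hi
    rcases hi with rfl | rfl
    · exact ⟨b, hab, rfl⟩
    · exact ⟨a, hab.symm, Finset.pair_comm _ _⟩
  obtain ⟨j, hij, rfl⟩ := aux e he hi
  obtain ⟨k, hik, rfl⟩ := aux e' he' hi'
  refine not_bad i j k hik ?_ hb
  rintro rfl
  exact hne rfl

theorem constr (m : ℕ) : ∃ (S : Finset E3) (T : Finset (Finset E3)),
      S.card = 2 * m ∧ (∀ P ∈ T, IsKGonOn 4 S P) ∧
      (∀ P ∈ T, ∀ Q ∈ T, P ≠ Q → ¬ IntersectBadly P Q) ∧ T.card = m.choose 2 := by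
  refine ⟨poly (Finset.range m), ((Finset.range m).powersetCard 2).map ⟨poly, poly_inj⟩,
    by simp [poly_card], ?_, ?_, by simp⟩
  · intro P hP
    simp only [Finset.mem_map, Finset.mem_powersetCard, Function.Embedding.coeFn_mk] at hP
    obtain ⟨e, ⟨he, hc⟩, rfl⟩ := hP
    exact ⟨poly_mono he, kgon_poly e hc⟩
  · intro P hP Q hQ hne
    simp only [Finset.mem_map, Finset.mem_powersetCard, Function.Embedding.coeFn_mk] at hP hQ
    obtain ⟨e, ⟨he, hc⟩, rfl⟩ := hP
    obtain ⟨e', ⟨he', hc'⟩, rfl⟩ := hQ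
    exact not_bad' e e' hc hc' (fun h => hne (by rw [h]))

theorem f3_ge (n m : ℕ) (h : 2 * m ≤ n) : m.choose 2 ≤ f3 n 4 := by
  obtain ⟨S, T, hS, hT, hb, hc⟩ := constr m
  obtain ⟨S', hSS, hS'⟩ := Infinite.exists_superset_card_eq S n (by omega)
  refine le_csSup ⟨2 ^ n, ?_⟩ ⟨S', T, hS', fun P hP => ⟨(hT P hP).1.trans hSS, (hT P hP).2⟩, hb, hc⟩
  rintro _ ⟨S, T, hS, hT, -, rfl⟩
  rw [← hS, ← Finset.card_powerset]
  exact Finset.card_le_card (fun P hP => Finset.mem_powerset.2 (hT P hP).1)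

theorem stmt8 :
    (∀ n : ℕ, 4 ≤ n → Even n → ∃ (S : Finset E3) (T : Finset (Finset E3)),
      S.card = n ∧ (∀ P ∈ T, IsKGonOn 4 S P) ∧
      (∀ P ∈ T, ∀ Q ∈ T, P ≠ Q → ¬ IntersectBadly P Q) ∧
      ((n : ℝ) ^ 2 - 2 * (n : ℝ)) / 8 ≤ (T.card : ℝ)) ∧
    (∃ c : ℝ, 0 < c ∧ ∃ N : ℕ, ∀ n : ℕ, N ≤ n → c * (n : ℝ) ^ 2 ≤ (f3 n 4 : ℝ)) := by
  constructor
  · intro n _ hn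
    obtain ⟨m, rfl⟩ := hn
    obtain ⟨S, T, hS, hT, hb, hc⟩ := constr m
    refine ⟨S, T, by omega, hT, hb, ?_⟩
    rw [hc, Nat.cast_choose_two]
    push_cast
    nlinarith
  · refine ⟨1/16, by norm_num, 8, fun n hn => ?_⟩
    have h := f3_ge n (n / 2) (by omega)
    have h' : (((n/2).choose 2 : ℕ) : ℝ) ≤ f3 n 4 := by exact_mod_cast h
    rw [Nat.cast_choose_two] at h'
    refine le_trans ?_ h'
    have h1 : (n:ℝ) ≤ 2 * ((n/2 : ℕ) : ℝ) + 1 := by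
      exact_mod_cast (by omega : n ≤ 2 * (n/2) + 1)
    have h2 : (8:ℝ) ≤ n := by exact_mod_cast hn
    generalize ((n/2 : ℕ) : ℝ) = y at *
    nlinarith
end
end

section
/- For every c ≥ 1, every 0 < α < π/2, and every ε > 0, there exists N such that for all n ≥ N the following holds: if S is a set of n points in ℝ³ and T is a family of (c,α)-fat hexagons with all vertices in S such that no two hexagons of T intersect badly, then |T| ≤ ε n². Equivalently, the maximum size F_{(c,α)}(n) of such a family satisfies F_{(c,α)}(n)/n² → 0 as n → ∞. -/
open Real EuclideanGeometry

noncomputable section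

/-- A hexagon in ℝ³, given by its vertices `V 0, …, V 5` listed in cyclic boundary
order: the vertices are distinct, coplanar, in convex position, and consecutive
vertices are adjacent on the boundary (the segment between them avoids the relative
interior of the hexagon). -/
def IsHexagon (V : Fin 6 → E3) : Prop :=
  Function.Injective V ∧
  Coplanar ℝ (Set.range V) ∧
  (∀ i : Fin 6, V i ∉ convexHull ℝ (V '' {j | j ≠ i})) ∧
  (∀ i : Fin 6,
    openSegment ℝ (V i) (V (i + 1)) ∩
      intrinsicInterior ℝ (convexHull ℝ (Set.range V)) = ∅)

/-- A hexagon is `(c, α)`-fat if the ratio of any two sides lies in `[1/c, c]` and it has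
three pairwise non-neighbouring vertices (an alternating triple) whose interior angles
lie in `[α, π - α]`. -/
def IsFatHexagon (c α : ℝ) (V : Fin 6 → E3) : Prop :=
  IsHexagon V ∧
  (∀ i j : Fin 6, dist (V i) (V (i + 1)) ≤ c * dist (V j) (V (j + 1))) ∧
  ((∀ i : Fin 6, Even (i : ℕ) →
      α ≤ ∠ (V (i - 1)) (V i) (V (i + 1)) ∧ ∠ (V (i - 1)) (V i) (V (i + 1)) ≤ π - α) ∨
   (∀ i : Fin 6, Odd (i : ℕ) →
      α ≤ ∠ (V (i - 1)) (V i) (V (i + 1)) ∧ ∠ (V (i - 1)) (V i) (V (i + 1)) ≤ π - α))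

/-- The (unordered) vertex set `H` forms a `(c, α)`-fat hexagon. -/
def IsFatHexagonSet (c α : ℝ) (H : Finset E3) : Prop :=
  ∃ V : Fin 6 → E3, IsFatHexagon c α V ∧ (H : Set E3) = Set.range V

lemma conv4 {s : Set E3} (hs : Convex ℝ s) {p q r w : E3} (hp : p ∈ s) (hq : q ∈ s) (hr : r ∈ s)
    (hw : w ∈ s) {a b c d : ℝ} (ha : 0 ≤ a) (hb : 0 ≤ b) (hc : 0 ≤ c) (hd : 0 ≤ d)
    (h : a + b + c + d = 1) : a • p + b • q + c • r + d • w ∈ s := by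
  have := hs.sum_mem (t := Finset.univ) (w := ![a, b, c, d]) (z := ![p, q, r, w])
    (by intro i _; fin_cases i <;> simp [*]) (by simp [Fin.sum_univ_four, h])
    (by intro i _; fin_cases i <;> simp [*])
  simpa [Fin.sum_univ_four] using this

lemma conv3 {s : Set E3} (hs : Convex ℝ s) {p q r : E3} (hp : p ∈ s) (hq : q ∈ s) (hr : r ∈ s)
    {a b c : ℝ} (ha : 0 ≤ a) (hb : 0 ≤ b) (hc : 0 ≤ c)
    (h : a + b + c = 1) : a • p + b • q + c • r ∈ s := by
  have := conv4 hs hp hq hr hr ha hb hc le_rfl (by linarith)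
  simpa using this

def gm (u v : E3) : ℝ := inner ℝ u u * inner ℝ v v - (inner ℝ u v) ^ 2

lemma gm_comb (u v : E3) (a b : ℝ) : gm (a • u + b • v) v = a ^ 2 * gm u v := by
  unfold gm
  simp only [inner_add_left, inner_add_right, inner_smul_left, inner_smul_right,
    real_inner_comm u v]
  simp
  ring

lemma gm_symm (u v : E3) : gm u v = gm v u := by
  unfold gm; rw [real_inner_comm u v]; ring

lemma gm_le (u v : E3) : gm u v ≤ ‖u‖ ^ 2 * ‖v‖ ^ 2 := by
  unfold gm
  rw [real_inner_self_eq_norm_sq, real_inner_self_eq_norm_sq]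
  nlinarith [sq_nonneg (inner ℝ u v)]

lemma gm_nonneg (u v : E3) : 0 ≤ gm u v := by
  unfold gm
  have := real_inner_mul_inner_self_le u v
  nlinarith

lemma gm_eq_zero {u v : E3} (hu : u ≠ 0) (h : gm u v = 0) : ∃ t : ℝ, v = t • u := by
  have hu' : inner ℝ u u ≠ 0 := by simpa using hu
  refine ⟨inner ℝ u v / inner ℝ u u, ?_⟩
  have : inner ℝ (v - (inner ℝ u v / inner ℝ u u : ℝ) • u) (v - (inner ℝ u v / inner ℝ u u : ℝ) • u)
      = gm u v / inner ℝ u u := by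
    unfold gm
    simp only [inner_sub_left, inner_sub_right, inner_smul_left, inner_smul_right,
      real_inner_comm u v]
    simp only [conj_trivial]
    field_simp
    ring
  rw [h, zero_div, inner_self_eq_zero, sub_eq_zero] at this
  exact this

lemma gm_bound {u v : E3} {m M : ℝ} (hm : 0 < m) (hg : m ^ 2 ≤ gm u v) (hv : ‖v‖ ≤ M)
    (a b : ℝ) : |a| * m ≤ M * ‖a • u + b • v‖ := by
  have hM : 0 ≤ M := (norm_nonneg _).trans hv
  have h1 := gm_comb u v a b
  have h2 := gm_le (a • u + b • v) v
  apply abs_le_of_sq_le_sq' _ (by positivity) |>.2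
  calc (|a| * m) ^ 2 = a ^ 2 * m ^ 2 := by rw [mul_pow, sq_abs]
    _ ≤ a ^ 2 * gm u v := by gcongr
    _ ≤ ‖a • u + b • v‖ ^ 2 * ‖v‖ ^ 2 := by rw [← h1]; exact h2
    _ ≤ ‖a • u + b • v‖ ^ 2 * M ^ 2 := by gcongr
    _ = _ := by ring

lemma mem_int {H : Set E3} {p q r W : E3} (hp : p ∈ H) (hq : q ∈ H) (hr : r ∈ H)
    (hW : W ∈ H) (hpl : ∀ z ∈ affineSpan ℝ H, ∃ a b : ℝ, z = p + a • (q - p) + b • (r - p))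
    {K : ℝ} (hK : 0 < K) (hKb : ∀ a b : ℝ, |a| ≤ K * ‖a • (q - p) + b • (r - p)‖ ∧
      |b| ≤ K * ‖a • (q - p) + b • (r - p)‖) {x y z t : ℝ} (hx : 0 < x) (hy : 0 < y) (hz : 0 < z)
    (ht : 0 ≤ t) (hs : x + y + z + t = 1) :
    x • p + y • q + z • r + t • W ∈ intrinsicInterior ℝ (convexHull ℝ H) := by
  have sub := subset_convexHull ℝ H
  have cv := convex_convexHull ℝ H
  have hmem : x • p + y • q + z • r + t • W ∈ convexHull ℝ H :=
    conv4 cv (sub hp) (sub hq) (sub hr) (sub hW) hx.le hy.le hz.le ht hs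
  rw [mem_intrinsicInterior]
  refine ⟨⟨_, subset_affineSpan ℝ _ hmem⟩, ?_, rfl⟩
  rw [mem_interior_iff_mem_nhds, Metric.mem_nhds_iff]
  set m := min x (min y z)
  have hm0 : 0 < m := by simp [m, hx, hy, hz]
  have hmx : m ≤ x := min_le_left _ _
  have hmy : m ≤ y := (min_le_right _ _).trans (min_le_left _ _)
  have hmz : m ≤ z := (min_le_right _ _).trans (min_le_right _ _)
  refine ⟨m / (3 * K), by positivity, ?_⟩
  rintro ⟨w, hw⟩ hwb
  simp only [Metric.mem_ball, Subtype.dist_eq] at hwb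
  simp only [Set.mem_preimage]
  rw [affineSpan_convexHull] at hw
  obtain ⟨a, b, hab⟩ := hpl w hw
  obtain ⟨a', b', hab'⟩ := hpl _ (by
    have := subset_affineSpan ℝ _ hmem
    rwa [affineSpan_convexHull] at this)
  have hd : w - (x • p + y • q + z • r + t • W) = (a - a') • (q - p) + (b - b') • (r - p) := by
    rw [hab', hab]; module
  rw [dist_eq_norm, hd] at hwb
  obtain ⟨h1, h2⟩ := hKb (a - a') (b - b')
  have h3 : K * ‖(a - a') • (q - p) + (b - b') • (r - p)‖ < m / 3 := by
    calc _ < K * (m / (3 * K)) := by gcongr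
      _ = m / 3 := by field_simp
  have h1' := abs_le.1 (h1.trans h3.le)
  have h2' := abs_le.1 (h2.trans h3.le)
  have : w = (x - (a - a') - (b - b')) • p + (y + (a - a')) • q + (z + (b - b')) • r + t • W := by
    rw [sub_eq_iff_eq_add] at hd
    rw [hd]; module
  rw [this]
  exact conv4 cv (sub hp) (sub hq) (sub hr) (sub hW) (by linarith) (by linarith) (by linarith) ht
    (by linarith)

lemma ear_aux {p q r w : E3} {x y z : ℝ} (hw : w = x • p + y • q + z • r) (hs : x + y + z = 1)
    {s : Set E3} (hp : p ∉ convexHull ℝ s) (hq : q ∈ s) (hr : r ∈ s) (hws : w ∈ s) :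
    ¬ (y ≤ 0 ∧ z ≤ 0) := by
  rintro ⟨hy, hz⟩
  apply hp
  have sub := subset_convexHull ℝ s
  have hx : 0 < x := by linarith
  have := conv3 (convex_convexHull ℝ s) (sub hws) (sub hq) (sub hr) (a := 1 / x) (b := -y / x)
    (c := -z / x) (by positivity) (div_nonneg (by linarith) hx.le) (div_nonneg (by linarith) hx.le)
    (by field_simp; linarith)
  convert this using 1
  rw [hw]
  match_scalars <;> field_simp <;> ring

lemma ear_aux2 {p q r w : E3} {x y z : ℝ} (hw : w = x • p + y • q + z • r) (hs : x + y + z = 1)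
    {I : Set E3}
    (hI : ∀ a b d : ℝ, 0 < a → 0 < b → 0 < d → a + b + d = 1 → a • p + b • q + d • r ∈ I)
    (h1 : openSegment ℝ p w ∩ I = ∅) : ¬ (x < 0 ∧ 0 < y ∧ 0 < z) := by
  rintro ⟨hx, hy, hz⟩
  have hx1 : 0 < 1 - x := by linarith
  have ht : 1 / (2 * (1 - x)) < 1 := by rw [div_lt_one (by positivity)]; linarith
  have ht0 : 0 < 1 / (2 * (1 - x)) := by positivity
  set t := 1 / (2 * (1 - x)) with htd
  have hte : t * (1 - x) = 1 / 2 := by rw [htd]; field_simp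
  have hin := hI (1 - t + t * x) (t * y) (t * z) (by nlinarith) (by positivity) (by positivity)
    (by linear_combination t * hs)
  have hseg : (1 - t + t * x) • p + (t * y) • q + (t * z) • r ∈ openSegment ℝ p w := by
    refine ⟨1 - t, t, by linarith, ht0, by ring, ?_⟩
    rw [hw]; module
  have hmem : _ ∈ openSegment ℝ p w ∩ I := ⟨hseg, hin⟩
  rw [h1] at hmem
  exact hmem

lemma ear {p q r w : E3} {x y z : ℝ} (hw : w = x • p + y • q + z • r) (hs : x + y + z = 1)
    {I : Set E3}
    (hI : ∀ a b d : ℝ, 0 < a → 0 < b → 0 < d → a + b + d = 1 → a • p + b • q + d • r ∈ I)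
    (h1 : openSegment ℝ p w ∩ I = ∅) (h2 : openSegment ℝ w q ∩ I = ∅)
    (hp : p ∉ convexHull ℝ {q, r, w}) (hq : q ∉ convexHull ℝ {p, r, w})
    (hr : r ∉ convexHull ℝ {p, q, w}) (hwn : w ∉ convexHull ℝ {p, q, r}) :
    0 < x ∧ 0 < y ∧ z < 0 := by
  have a1 := ear_aux hw hs hp (by simp) (by simp) (by simp)
  have a2 := ear_aux (w := w) (p := q) (q := p) (r := r) (x := y) (y := x) (z := z)
    (by rw [hw]; module) (by linarith) hq (by simp) (by simp) (by simp)
  have a3 := ear_aux (w := w) (p := r) (q := p) (r := q) (x := z) (y := x) (z := y)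
    (by rw [hw]; module) (by linarith) hr (by simp) (by simp) (by simp)
  have a4 := ear_aux2 hw hs hI h1
  have a5 := ear_aux2 (w := w) (p := q) (q := p) (r := r) (x := y) (y := x) (z := z)
    (by rw [hw]; module) (by linarith) (I := I) (by
      intro a b d ha hb hd h
      have := hI b a d hb ha hd (by linarith)
      rwa [add_comm (b • p)] at this) (by rwa [openSegment_symm])
  have a6 : ¬ (0 ≤ x ∧ 0 ≤ y ∧ 0 ≤ z) := by
    rintro ⟨hx, hy, hz⟩
    apply hwn
    rw [hw]
    exact conv3 (convex_convexHull ℝ _) (subset_convexHull ℝ _ (by simp))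
      (subset_convexHull ℝ _ (by simp)) (subset_convexHull ℝ _ (by simp)) hx hy hz hs
  grind

lemma vert {p q r w w' : E3} {x y z x' y' z' : ℝ} (hw : w = x • p + y • q + z • r)
    (hs : x + y + z = 1) (hw' : w' = x' • p + y' • q + z' • r) (hs' : x' + y' + z' = 1)
    (hx : 0 < x) (hy : 0 < y) (hx' : x' < 0) (hy' : 0 < y')
    (hq : q ∉ convexHull ℝ {r, w, w'}) : z * x' < x * z' := by
  by_contra! hcon
  apply hq
  obtain ⟨D, hDe⟩ : ∃ D, D = -x' * y + x * y' := ⟨_, rfl⟩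
  have hD : 0 < D := by rw [hDe]; nlinarith
  have sub := subset_convexHull ℝ ({r, w, w'} : Set E3)
  have := conv3 (convex_convexHull ℝ {r, w, w'}) (sub (by simp)) (sub (by simp)) (sub (by simp))
    (p := r) (q := w) (r := w') (a := (z * x' - x * z') / D)
    (b := -x' / D) (c := x / D)
    (div_nonneg (by linarith) hD.le) (div_nonneg (by linarith) hD.le) (by positivity)
    (by rw [← add_div, ← add_div, div_eq_one_iff_eq hD.ne', hDe]
        linear_combination (-x') * (-hs) + x * (-hs'))
  convert this using 1
  rw [hw, hw']
  match_scalars <;> field_simp <;> first | ring1 | linarith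

lemma prodlem {x0 x2 y z2 z4 z w0 w4 u : ℝ} (hz2 : 0 < z2)
    (hz4 : 0 < z4) (hw0 : 0 < w0) (hw4 : 0 < w4) (hx : x0 + x2 = 1 + y) (hz : z2 + z4 = 1 + z)
    (hw : w0 + w4 = 1 + u) (h1 : y * z < x0 * z4) (h2 : z * u < z2 * w0) (h3 : u * y < w4 * x2) :
    y ≤ 1 ∨ z ≤ 1 ∨ u ≤ 1 := by
  by_contra! h
  obtain ⟨hy1, hz1, hu1⟩ := h
  have k : ∀ a b s : ℝ, a + b = 1 + s → 1 < s → a * b ≤ s * s := by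
    intro a b s h1 h2
    nlinarith [sq_nonneg (a - b)]
  have e1 := k _ _ _ hx hy1
  have e2 := k _ _ _ hz hz1
  have e3 := k _ _ _ hw hu1
  have f1 : (y * z) * (z * u) < (x0 * z4) * (z2 * w0) := by gcongr
  have f2 : (y * z) * (z * u) * (u * y) < (x0 * z4) * (z2 * w0) * (w4 * x2) := by gcongr
  have f3 : (x0 * x2) * (z2 * z4) ≤ (y * y) * (z * z) := by gcongr
  have f4 : (x0 * x2) * (z2 * z4) * (w0 * w4) ≤ (y * y) * (z * z) * (u * u) := by gcongr
  nlinarith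

lemma gm2 (u v : E3) (a b c d : ℝ) :
    gm (a • u + b • v) (c • u + d • v) = (a * d - b * c) ^ 2 * gm u v := by
  unfold gm
  simp only [inner_add_left, inner_add_right, inner_smul_left, inner_smul_right,
    real_inner_comm u v]
  simp only [conj_trivial]
  ring

lemma ear_gm1 {p q r w : E3} {x y z : ℝ} (hw : w = x • p + y • q + z • r) (hs : x + y + z = 1) :
    gm (p - w) (q - w) = z ^ 2 * gm (q - p) (r - p) := by
  obtain rfl : x = 1 - y - z := by linarith
  have h1 : p - w = (-y) • (q - p) + (-z) • (r - p) := by rw [hw]; module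
  have h2 : q - w = (1 - y) • (q - p) + (-z) • (r - p) := by rw [hw]; module
  rw [h1, h2, gm2]; ring

lemma ear_gm2 {p q r w : E3} {x y z : ℝ} (hw : w = x • p + y • q + z • r) (hs : x + y + z = 1) :
    gm (q - w) (r - w) = x ^ 2 * gm (q - p) (r - p) := by
  obtain rfl : x = 1 - y - z := by linarith
  have h1 : r - w = (-y) • (q - p) + (1 - z) • (r - p) := by rw [hw]; module
  have h2 : q - w = (1 - y) • (q - p) + (-z) • (r - p) := by rw [hw]; module
  rw [h1, h2, gm2]; ring

lemma ear_gm3 {p q r w : E3} {x y z : ℝ} (hw : w = x • p + y • q + z • r) (hs : x + y + z = 1) :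
    gm (r - w) (p - w) = y ^ 2 * gm (q - p) (r - p) := by
  obtain rfl : x = 1 - y - z := by linarith
  have h1 : r - w = (-y) • (q - p) + (1 - z) • (r - p) := by rw [hw]; module
  have h2 : p - w = (-y) • (q - p) + (-z) • (r - p) := by rw [hw]; module
  rw [h1, h2, gm2]; ring

lemma ang_gm {p w q : E3} {α : ℝ} (hα : 0 < α) (hα1 : α < π / 2) (h1 : α ≤ ∠ p w q)
    (h2 : ∠ p w q ≤ π - α) :
    (dist p w * dist q w * sin α) ^ 2 ≤ gm (p - w) (q - w) := by
  have hc : |cos (∠ p w q)| ≤ cos α := by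
    rw [abs_le]
    constructor
    · rw [← cos_pi_sub]
      exact cos_le_cos_of_nonneg_of_le_pi (by linarith) (by linarith) h2
    · exact cos_le_cos_of_nonneg_of_le_pi hα.le (by linarith) h1
  have hc2 : cos (∠ p w q) ^ 2 ≤ cos α ^ 2 := by
    rw [← sq_abs]; gcongr
  have hi := InnerProductGeometry.cos_angle_mul_norm_mul_norm (p - w) (q - w)
  have ha : ∠ p w q = InnerProductGeometry.angle (p - w) (q - w) := rfl
  rw [← ha] at hi
  unfold gm
  rw [← hi, real_inner_self_eq_norm_sq, real_inner_self_eq_norm_sq, dist_eq_norm, dist_eq_norm,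
    mul_pow, sin_sq]
  nlinarith [mul_nonneg (sq_nonneg (‖p - w‖ * ‖q - w‖)) (sub_nonneg.2 hc2)]

lemma plane {V : Fin 6 → E3} (hV : Coplanar ℝ (Set.range V)) {p q r : E3} (hp : p ∈ Set.range V)
    (hq : q ∈ Set.range V) (hr : r ∈ Set.range V) (hg : 0 < gm (q - p) (r - p)) :
    ∀ z ∈ affineSpan ℝ (Set.range V), ∃ a b : ℝ, z = p + a • (q - p) + b • (r - p) := by
  intro z hz
  have hli : LinearIndependent ℝ ![q - p, r - p] := by
    rw [LinearIndependent.pair_iff]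
    intro s t hst
    have h1 := gm_comb (q - p) (r - p) s t
    have h2 := gm_comb (r - p) (q - p) t s
    rw [hst] at h1
    rw [add_comm, hst, gm_symm (r - p) (q - p)] at h2
    have h0 : ∀ v, gm 0 v = 0 := by intro v; simp [gm]
    rw [h0] at h1 h2
    constructor
    · have := (mul_eq_zero.1 h1.symm).resolve_right hg.ne'
      simpa using this
    · have := (mul_eq_zero.1 h2.symm).resolve_right hg.ne'
      simpa using this
  have hle : Submodule.span ℝ (Set.range ![q - p, r - p]) ≤ vectorSpan ℝ (Set.range V) := by
    rw [Submodule.span_le]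
    rintro _ ⟨i, rfl⟩
    fin_cases i
    · exact vsub_mem_vectorSpan ℝ hq hp
    · exact vsub_mem_vectorSpan ℝ hr hp
  have hfr := finrank_span_eq_card hli
  have heq := Submodule.eq_of_le_of_finrank_le hle (by
    rw [hfr]; simpa using hV.finrank_le_two)
  have hz' : z - p ∈ vectorSpan ℝ (Set.range V) := by
    rw [← direction_affineSpan]
    exact AffineSubspace.vsub_mem_direction hz (subset_affineSpan ℝ _ hp)
  rw [← heq] at hz'
  simp only [Matrix.range_cons, Matrix.range_empty, Set.union_empty, Set.singleton_union] at hz'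
  obtain ⟨a, b, hab⟩ := Submodule.mem_span_pair.1 hz'
  refine ⟨a, b, ?_⟩
  rw [add_assoc, hab]; abel

lemma gm_pos {p q r : E3} (hpq : p ≠ q) (h1 : p ∉ convexHull ℝ {q, r})
    (h2 : q ∉ convexHull ℝ {p, r}) (h3 : r ∉ convexHull ℝ {p, q}) : 0 < gm (q - p) (r - p) := by
  refine lt_of_le_of_ne (gm_nonneg _ _) (fun h => ?_)
  obtain ⟨t, ht⟩ := gm_eq_zero (sub_ne_zero.2 hpq.symm) h.symm
  have hr : r = (1 - t) • p + t • q := by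
    rw [sub_eq_iff_eq_add] at ht; rw [ht]; module
  rw [convexHull_pair] at h1 h2 h3
  rcases le_or_gt t 0 with h0 | h0
  · apply h1
    have : 0 < 1 - t := by linarith
    refine ⟨-t / (1 - t), 1 / (1 - t), div_nonneg (by linarith) this.le, by positivity, by
      field_simp; ring, ?_⟩
    rw [hr]
    match_scalars <;> field_simp <;> ring
  rcases le_or_gt t 1 with h4 | h4
  · exact h3 ⟨1 - t, t, by linarith, h0.le, by ring, hr.symm⟩
  · apply h2
    refine ⟨(t - 1) / t, 1 / t, div_nonneg (by linarith) h0.le, by positivity, by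
      field_simp; ring, ?_⟩
    rw [hr]
    match_scalars <;> field_simp <;> ring

def Good (η : ℝ) (H : Set E3) (p q r : E3) : Prop :=
  p ∈ H ∧ q ∈ H ∧ r ∈ H ∧ ∀ x y z : ℝ, x + y + z = 1 → -η < x → -η < y → -η < z →
    x ≤ 3 / 4 → y ≤ 3 / 4 → z ≤ 3 / 4 →
    x • p + y • q + z • r ∈ intrinsicInterior ℝ (convexHull ℝ H)

lemma good_aux {I : Set E3} {p q r W : E3} {X Y Z k M x y z : ℝ}
    (hI : ∀ a b d t : ℝ, 0 < a → 0 < b → 0 < d → 0 ≤ t → a + b + d + t = 1 →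
      a • p + b • q + d • r + t • W ∈ I)
    (hW : W = X • p + Y • q + Z • r) (hs : X + Y + Z = 1)
    (hk : 0 < k) (hM : 0 < M) (hX : X ≤ -k) (hY : Y ≤ M) (hZ : Z ≤ M) (h1 : x + y + z = 1)
    (hx : -(k / (8 * M)) < x) (hx0 : x ≤ 0)
    (hy : y ≤ 3 / 4) (hz : z ≤ 3 / 4) : x • p + y • q + z • r ∈ I := by
  obtain ⟨t, ht⟩ : ∃ t, t = 1 / (8 * M) := ⟨_, rfl⟩
  have ht0 : 0 < t := by rw [ht]; positivity
  have htM : t * M = 1 / 8 := by rw [ht]; field_simp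
  have htk : t * k = k / (8 * M) := by rw [ht]; field_simp
  have := hI (x - t * X) (y - t * Y) (z - t * Z) t (by nlinarith) (by nlinarith) (by nlinarith)
    ht0.le (by linear_combination h1 - t * hs)
  convert this using 1
  rw [hW]; module

def FatT (η M G : ℝ) (H : Set E3) (p q r : E3) (L : ℝ) : Prop :=
  Good η H p q r ∧ 0 < L ∧ ‖q - p‖ ≤ M * L ∧ ‖r - p‖ ≤ M * L ∧
  ∀ x y : ℝ, |x| * L ≤ G * ‖x • (q - p) + y • (r - p)‖ ∧
    |y| * L ≤ G * ‖x • (q - p) + y • (r - p)‖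

lemma earb {L s c g Z : ℝ} (hL : 0 < L) (hs : 0 < s) (hc : 1 ≤ c) (hZ : Z < 0)
    (hm : (L ^ 2 * s / c ^ 2) ^ 2 ≤ g) (hg : g ≤ (4 * c ^ 2 * L ^ 2) ^ 2)
    (he1 : (L ^ 2 * s / c ^ 2) ^ 2 ≤ Z ^ 2 * g) (he2 : Z ^ 2 * g ≤ (c ^ 2 * L ^ 2) ^ 2) :
    Z ≤ -(s / (4 * c ^ 4)) ∧ 1 - Z ≤ 1 + c ^ 4 / s := by
  have hc0 : 0 < c := by linarith
  obtain ⟨y, rfl⟩ : ∃ y, Z = -y := ⟨-Z, by ring⟩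
  have hy : 0 < y := by linarith
  have h1 : (L ^ 2 * s / c ^ 2) ^ 2 ≤ (y * (4 * c ^ 2 * L ^ 2)) ^ 2 := by
    refine he1.trans ?_
    rw [mul_pow, neg_sq]; gcongr
  have h2 : (y * (L ^ 2 * s / c ^ 2)) ^ 2 ≤ (c ^ 2 * L ^ 2) ^ 2 := by
    refine le_trans ?_ he2
    rw [mul_pow, neg_sq]; gcongr
  have h1' := (abs_le_of_sq_le_sq' h1 (by positivity)).2
  have h2' := (abs_le_of_sq_le_sq' h2 (by positivity)).2
  constructor
  · have : s / (4 * c ^ 4) ≤ y := by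
      rw [div_le_iff₀ (by positivity)]
      rw [div_le_iff₀ (by positivity)] at h1'
      have : L ^ 2 * s ≤ L ^ 2 * (y * (4 * c ^ 4)) := by nlinarith
      exact le_of_mul_le_mul_left this (by positivity)
    linarith
  · have : y ≤ c ^ 4 / s := by
      rw [le_div_iff₀ hs]
      have e : y * (L ^ 2 * s / c ^ 2) = (y * s * L ^ 2) / c ^ 2 := by ring
      rw [e, div_le_iff₀ (by positivity)] at h2'
      have : L ^ 2 * (y * s) ≤ L ^ 2 * (c ^ 4) := by nlinarith
      exact le_of_mul_le_mul_left this (by positivity)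
    linarith

set_option maxHeartbeats 2000000 in
lemma hex {c α : ℝ} (hc : 1 ≤ c) (hα₀ : 0 < α) (hα₁ : α < π / 2) {V : Fin 6 → E3}
    (hV : IsHexagon V) (hd : ∀ i j : Fin 6, dist (V i) (V (i + 1)) ≤ c * dist (V j) (V (j + 1)))
    (ha : ∀ i : Fin 6, Odd (i : ℕ) →
      α ≤ ∠ (V (i - 1)) (V i) (V (i + 1)) ∧ ∠ (V (i - 1)) (V i) (V (i + 1)) ≤ π - α) :
    ∃ p q r L, FatT (sin α / (4 * c ^ 4) / (8 * (1 + c ^ 4 / sin α))) (2 * c)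
      (2 * c ^ 3 / sin α) (Set.range V) p q r L := by
  obtain ⟨hinj, hcop, hcx, hseg⟩ := hV
  have hc0 : 0 < c := by linarith
  have hsin : 0 < sin α := sin_pos_of_pos_of_lt_pi hα₀ (by linarith)
  -- sides
  obtain ⟨L, hL⟩ : ∃ L, L = dist (V 0) (V 1) := ⟨_, rfl⟩
  have hL0 : 0 < L := by rw [hL]; exact dist_pos.2 (fun h => absurd (hinj h) (by decide))
  have hup : ∀ i : Fin 6, dist (V i) (V (i + 1)) ≤ c * L := fun i => by
    rw [hL]; exact hd i 0
  have hlo : ∀ i : Fin 6, L / c ≤ dist (V i) (V (i + 1)) := fun i => by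
    rw [div_le_iff₀ hc0, hL, mul_comm]; exact hd 0 i
  -- convex position
  have hcx' : ∀ (i : Fin 6) (s : Set E3), s ⊆ V '' {j | j ≠ i} → V i ∉ convexHull ℝ s :=
    fun i s hs h => hcx i (convexHull_mono hs h)
  have cx2 : ∀ i j k : Fin 6, j ≠ i → k ≠ i → V i ∉ convexHull ℝ {V j, V k} := by
    intro i j k hj hk
    apply hcx'
    rintro _ (rfl | rfl)
    exacts [⟨j, hj, rfl⟩, ⟨k, hk, rfl⟩]
  have cx3 : ∀ i j k l : Fin 6, j ≠ i → k ≠ i → l ≠ i → V i ∉ convexHull ℝ {V j, V k, V l} := by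
    intro i j k l hj hk hl
    apply hcx'
    rintro _ (rfl | rfl | rfl)
    exacts [⟨j, hj, rfl⟩, ⟨k, hk, rfl⟩, ⟨l, hl, rfl⟩]
  have mem : ∀ i, V i ∈ Set.range V := fun i => ⟨i, rfl⟩
  have hg0 : 0 < gm (V 2 - V 0) (V 4 - V 0) := gm_pos (fun h => absurd (hinj h) (by decide))
    (cx2 _ _ _ (by decide) (by decide)) (cx2 _ _ _ (by decide) (by decide))
    (cx2 _ _ _ (by decide) (by decide))
  have hpl := plane hcop (mem 0) (mem 2) (mem 4) hg0
  obtain ⟨g, hg⟩ : ∃ g, g = gm (V 2 - V 0) (V 4 - V 0) := ⟨_, rfl⟩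
  -- generic bound
  have hint : ∀ W ∈ Set.range V, ∀ a b d t : ℝ, 0 < a → 0 < b → 0 < d → 0 ≤ t →
      a + b + d + t = 1 → a • V 0 + b • V 2 + d • V 4 + t • W ∈
        intrinsicInterior ℝ (convexHull ℝ (Set.range V)) := by
    intro W hW a b d t ha hb hd ht hs
    have hsq : (√(gm (V 2 - V 0) (V 4 - V 0))) ^ 2 ≤ gm (V 2 - V 0) (V 4 - V 0) :=
      (Real.sq_sqrt hg0.le).le
    have hsp := Real.sqrt_pos.2 hg0
    obtain ⟨N, hN1, hN2, hN⟩ : ∃ N, ‖V 2 - V 0‖ ≤ N ∧ ‖V 4 - V 0‖ ≤ N ∧ 0 < N :=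
      ⟨‖V 2 - V 0‖ + ‖V 4 - V 0‖ + 1, by linarith [norm_nonneg (V 4 - V 0)],
        by linarith [norm_nonneg (V 2 - V 0)], by positivity⟩
    refine mem_int (mem 0) (mem 2) (mem 4) hW hpl (K := N / √(gm (V 2 - V 0) (V 4 - V 0)))
      (by positivity) (fun a b => ⟨?_, ?_⟩) ha hb hd ht hs
    · rw [div_mul_eq_mul_div, le_div_iff₀ hsp]
      exact gm_bound hsp hsq hN2 a b
    · rw [div_mul_eq_mul_div, le_div_iff₀ hsp, add_comm]
      exact gm_bound hsp (by rw [gm_symm (V 4 - V 0)]; exact hsq) hN1 b a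
  have hI : ∀ a b d : ℝ, 0 < a → 0 < b → 0 < d → a + b + d = 1 → a • V 0 + b • V 2 + d • V 4 ∈
        intrinsicInterior ℝ (convexHull ℝ (Set.range V)) := by
    intro a b d ha hb hd hs
    have := hint (V 0) (mem 0) a b d 0 ha hb hd le_rfl (by linarith)
    simpa using this
  have crd : ∀ i, ∃ x y z : ℝ, V i = x • V 0 + y • V 2 + z • V 4 ∧ x + y + z = 1 := by
    intro i
    obtain ⟨a, b, hab⟩ := hpl (V i) (subset_affineSpan ℝ _ (mem i))
    exact ⟨1 - a - b, a, b, by rw [hab]; module, by ring⟩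
  obtain ⟨x0, x2, x4, hx, hxs⟩ := crd 1
  obtain ⟨z0, z2, z4, hz, hzs⟩ := crd 3
  obtain ⟨w0, w2, w4, hw, hws⟩ := crd 5
  obtain ⟨hx0, hx2, hx4⟩ := ear hx hxs hI (hseg 0) (hseg 1)
    (cx3 _ _ _ _ (by decide) (by decide) (by decide))
    (cx3 _ _ _ _ (by decide) (by decide) (by decide))
    (cx3 _ _ _ _ (by decide) (by decide) (by decide))
    (cx3 _ _ _ _ (by decide) (by decide) (by decide))
  have hz' : V 3 = z2 • V 2 + z4 • V 4 + z0 • V 0 := by rw [hz]; abel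
  have hw' : V 5 = w4 • V 4 + w0 • V 0 + w2 • V 2 := by rw [hw]; abel
  obtain ⟨hz2, hz4, hz0⟩ := ear hz' (by linarith)
    (fun a b d ha hb hd hs => by
      have := hI d a b hd ha hb (by linarith)
      rwa [show d • V 0 + a • V 2 + b • V 4 = a • V 2 + b • V 4 + d • V 0 by abel] at this)
    (hseg 2) (hseg 3)
    (cx3 _ _ _ _ (by decide) (by decide) (by decide))
    (cx3 _ _ _ _ (by decide) (by decide) (by decide))
    (cx3 _ _ _ _ (by decide) (by decide) (by decide))
    (cx3 _ _ _ _ (by decide) (by decide) (by decide))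
  obtain ⟨hw4, hw0, hw2⟩ := ear hw' (by linarith)
    (fun a b d ha hb hd hs => by
      have := hI b d a hb hd ha (by linarith)
      rwa [show b • V 0 + d • V 2 + a • V 4 = a • V 4 + b • V 0 + d • V 2 by abel] at this)
    (hseg 4) (hseg 5)
    (cx3 _ _ _ _ (by decide) (by decide) (by decide))
    (cx3 _ _ _ _ (by decide) (by decide) (by decide))
    (cx3 _ _ _ _ (by decide) (by decide) (by decide))
    (cx3 _ _ _ _ (by decide) (by decide) (by decide))
  have v2 := vert hx hxs hz hzs hx0 hx2 hz0 hz2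
    (cx3 _ _ _ _ (by decide) (by decide) (by decide))
  have v4 := vert (w' := V 5) (x' := w2) (y' := w4) (z' := w0) hz' (by linarith)
    (by rw [hw]; abel) (by linarith) hz2 hz4 hw2 hw4
    (cx3 _ _ _ _ (by decide) (by decide) (by decide))
  have v0 := vert (w' := V 1) (x' := x4) (y' := x0) (z' := x2) hw' (by linarith)
    (by rw [hx]; abel) (by linarith) hw4 hw0 hx4 hx0
    (cx3 _ _ _ _ (by decide) (by decide) (by decide))
  have hprod := prodlem (y := -x4) (z := -z0) (u := -w2) hz2 hz4 hw0 hw4 (x0 := x0) (x2 := x2)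
    (by linarith) (by linarith) (by linarith) (by linarith) (by linarith) (by linarith)
  -- ear areas
  have eg1 := ear_gm1 hx hxs
  have eg3 := ear_gm2 hz hzs
  have eg5 := ear_gm3 hw hws
  rw [← hg] at eg1 eg3 eg5
  have key : ∀ i : Fin 6, Odd (i : ℕ) →
      (L ^ 2 * sin α / c ^ 2) ^ 2 ≤ gm (V (i - 1) - V i) (V (i + 1) - V i) ∧
      gm (V (i - 1) - V i) (V (i + 1) - V i) ≤ (c ^ 2 * L ^ 2) ^ 2 := by
    intro i hi
    have h1 := hlo i
    have h2 := hlo (i - 1)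
    have h3 := hup i
    have h4 := hup (i - 1)
    rw [sub_add_cancel] at h2 h4
    rw [dist_comm] at h1 h3
    constructor
    · refine le_trans ?_ (ang_gm hα₀ hα₁ (ha i hi).1 (ha i hi).2)
      rw [show L ^ 2 * sin α / c ^ 2 = (L / c) * (L / c) * sin α by ring]
      gcongr
    · refine (gm_le _ _).trans ?_
      rw [← dist_eq_norm, ← dist_eq_norm]
      calc _ ≤ (c * L) ^ 2 * (c * L) ^ 2 := by gcongr
        _ = _ := by ring
  obtain ⟨k1, k1'⟩ := key 1 (by decide)
  obtain ⟨k3, k3'⟩ := key 3 (by decide)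
  obtain ⟨k5, k5'⟩ := key 5 (by decide)
  simp only [show (1 : Fin 6) - 1 = 0 from rfl, show (1 : Fin 6) + 1 = 2 from rfl,
    show (3 : Fin 6) - 1 = 2 from rfl, show (3 : Fin 6) + 1 = 4 from rfl,
    show (5 : Fin 6) - 1 = 4 from rfl, show (5 : Fin 6) + 1 = 0 from rfl] at k1 k1' k3 k3' k5 k5'
  rw [eg1] at k1 k1'
  rw [eg3] at k3 k3'
  rw [eg5] at k5 k5'
  have hgp : 0 < g := hg ▸ hg0
  have hm : (L ^ 2 * sin α / c ^ 2) ^ 2 ≤ g := by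
    have aux : ∀ t : ℝ, t < 0 → -t ≤ 1 → t ^ 2 * g ≤ g := by
      intro t h1 h2
      have : t ^ 2 ≤ 1 := by nlinarith
      nlinarith
    rcases hprod with h | h | h
    · exact k1.trans (aux _ hx4 h)
    · exact k3.trans (aux _ hz0 h)
    · exact k5.trans (aux _ hw2 h)
  have n2 : ‖V 2 - V 0‖ ≤ 2 * c * L := by
    rw [← dist_eq_norm, dist_comm]
    have h1 := hup 0
    have h2 := hup 1
    have := dist_triangle (V 0) (V 1) (V 2)
    simp only [show (1 : Fin 6) + 1 = 2 from rfl, zero_add] at h1 h2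
    linarith
  have n4 : ‖V 4 - V 0‖ ≤ 2 * c * L := by
    rw [← dist_eq_norm]
    have h1 := hup 4
    have h2 := hup 5
    have := dist_triangle (V 4) (V 5) (V 0)
    simp only [show (4 : Fin 6) + 1 = 5 from rfl, show (5 : Fin 6) + 1 = 0 from rfl] at h1 h2
    linarith
  have hgu : g ≤ (4 * c ^ 2 * L ^ 2) ^ 2 := by
    rw [hg]
    refine (gm_le _ _).trans ?_
    calc _ ≤ (2 * c * L) ^ 2 * (2 * c * L) ^ 2 := by gcongr
        _ = _ := by ring
  obtain ⟨b1, b1'⟩ := earb hL0 hsin hc hx4 hm hgu k1 k1'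
  obtain ⟨b3, b3'⟩ := earb hL0 hsin hc hz0 hm hgu k3 k3'
  obtain ⟨b5, b5'⟩ := earb hL0 hsin hc hw2 hm hgu k5 k5'
  refine ⟨V 0, V 2, V 4, L, ⟨mem 0, mem 2, mem 4, ?_⟩, hL0, n2, n4, ?_⟩
  · intro x y z hs h1 h2 h3 h4 h5 h6
    have hk : 0 < sin α / (4 * c ^ 4) := by positivity
    have hM : 0 < 1 + c ^ 4 / sin α := by positivity
    by_cases h7 : x ≤ 0
    · exact good_aux (hint (V 3) (mem 3)) hz hzs hk hM b3 (by linarith) (by linarith) hs h1 h7 h5 h6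
    by_cases h8 : y ≤ 0
    · have := good_aux (I := intrinsicInterior ℝ (convexHull ℝ (Set.range V)))
        (p := V 2) (q := V 0) (r := V 4) (W := V 5) (X := w2) (Y := w0) (Z := w4)
        (x := y) (y := x) (z := z) (fun a b d t ha hb hd ht hs => by
          have := hint (V 5) (mem 5) b a d t hb ha hd ht (by linarith)
          rwa [add_comm (b • V 0)] at this) (by rw [hw]; abel) (by linarith) hk hM b5 (by linarith)
          (by linarith) (by linarith) h2 h8 h4 h6
      rwa [add_comm (y • V 2)] at this
    by_cases h9 : z ≤ 0
    · have := good_aux (I := intrinsicInterior ℝ (convexHull ℝ (Set.range V)))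
        (p := V 4) (q := V 0) (r := V 2) (W := V 1) (X := x4) (Y := x0) (Z := x2)
        (x := z) (y := x) (z := y) (fun a b d t ha hb hd ht hs => by
          have := hint (V 1) (mem 1) b d a t hb hd ha ht (by linarith)
          rwa [show b • V 0 + d • V 2 + a • V 4 = a • V 4 + b • V 0 + d • V 2 by abel] at this)
          (by rw [hx]; abel) (by linarith) hk hM b1 (by linarith)
          (by linarith) (by linarith) h3 h9 h4 h5
      rwa [show z • V 4 + x • V 0 + y • V 2 = x • V 0 + y • V 2 + z • V 4 by abel] at this
    exact hI x y z (by linarith) (by linarith) (by linarith) hs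
  · have conv : ∀ t N : ℝ, t * (L ^ 2 * sin α / c ^ 2) ≤ 2 * c * L * N →
        t * L ≤ 2 * c ^ 3 / sin α * N := by
      intro t N h
      rw [div_mul_eq_mul_div, le_div_iff₀ hsin]
      rw [← mul_div_assoc, div_le_iff₀ (by positivity)] at h
      have : L * (t * L * sin α) ≤ L * (2 * c ^ 3 * N) := by nlinarith
      exact le_of_mul_le_mul_left this hL0
    intro x y
    have hmp : 0 < L ^ 2 * sin α / c ^ 2 := by positivity
    rw [hg] at hm
    refine ⟨conv _ _ (gm_bound hmp hm n4 x y), conv _ _ ?_⟩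
    rw [add_comm]
    exact gm_bound hmp (by rw [gm_symm (V 4 - V 0)]; exact hm) n2 y x

lemma hexset {c α : ℝ} (hc : 1 ≤ c) (hα₀ : 0 < α) (hα₁ : α < π / 2) {H : Finset E3}
    (hH : IsFatHexagonSet c α H) :
    ∃ p q r L, FatT (sin α / (4 * c ^ 4) / (8 * (1 + c ^ 4 / sin α))) (2 * c)
      (2 * c ^ 3 / sin α) (H : Set E3) p q r L := by
  obtain ⟨V, ⟨hV, hd, ha⟩, hr⟩ := hH
  rw [hr]
  rcases ha with ha | ha
  · have hrange : Set.range (fun i => V (i + 1)) = Set.range V :=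
      (Equiv.addRight (1 : Fin 6)).surjective.range_comp V
    rw [← hrange]
    obtain ⟨hinj, hcop, hcx, hseg⟩ := hV
    refine hex hc hα₀ hα₁ (V := fun i => V (i + 1)) ⟨?_, ?_, ?_, ?_⟩ ?_ ?_
    · intro i j h
      exact add_right_cancel (hinj h)
    · rwa [hrange]
    · intro i h
      refine hcx (i + 1) (convexHull_mono ?_ h)
      rintro _ ⟨j, hj, rfl⟩
      exact ⟨j + 1, fun h => hj (add_right_cancel h), rfl⟩
    · intro i
      rw [hrange]
      exact hseg (i + 1)
    · intro i j
      exact hd (i + 1) (j + 1)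
    · intro i hi
      have := ha (i + 1) (by revert i; decide)
      simp only [sub_add_cancel]
      rwa [add_sub_cancel_right] at this
  · exact hex hc hα₀ hα₁ hV hd ha

lemma Good.rot {η : ℝ} {H : Set E3} {p q r : E3} (h : Good η H p q r) : Good η H q r p := by
  obtain ⟨hp, hq, hr, h⟩ := h
  refine ⟨hq, hr, hp, fun x y z hs h1 h2 h3 h4 h5 h6 => ?_⟩
  have := h z x y (by linarith) h3 h1 h2 h6 h4 h5
  rwa [show z • p + x • q + y • r = x • q + y • r + z • p by abel] at this

lemma Good.swap {η : ℝ} {H : Set E3} {p q r : E3} (h : Good η H p q r) : Good η H q p r := by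
  obtain ⟨hp, hq, hr, h⟩ := h
  refine ⟨hq, hp, hr, fun x y z hs h1 h2 h3 h4 h5 h6 => ?_⟩
  have := h y x z (by linarith) h2 h1 h3 h5 h4 h6
  rwa [add_comm (y • p)] at this

lemma bad_of {A B : Finset E3} {b x : E3} (hA : b ∈ A) (hB : b ∈ B)
    (h1 : x ∈ intrinsicInterior ℝ (convexHull ℝ (A : Set E3)))
    (h2 : x ∈ intrinsicInterior ℝ (convexHull ℝ (B : Set E3))) : IntersectBadly A B :=
  ⟨⟨b, hA, hB, subset_convexHull ℝ _ hA, subset_convexHull ℝ _ hB⟩,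
    ⟨x, ⟨intrinsicInterior_subset h1, intrinsicInterior_subset h2⟩, h1, h2⟩⟩

lemma bad_edge {η : ℝ} (hη : 0 < η) {A B : Finset E3} {p q r r' : E3} (hA : Good η A p q r)
    (hB : Good η B p q r') : IntersectBadly A B := by
  have h1 := hA.2.2.2 (1 / 2) (1 / 2) 0 (by norm_num) (by linarith) (by linarith) (by linarith)
    (by norm_num) (by norm_num) (by norm_num)
  have h2 := hB.2.2.2 (1 / 2) (1 / 2) 0 (by norm_num) (by linarith) (by linarith) (by linarith)
    (by norm_num) (by norm_num) (by norm_num)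
  simp only [zero_smul] at h1 h2
  exact bad_of hA.1 hB.1 h1 h2

lemma core_s10 {η θ : ℝ} {A B : Finset E3} {a b c cA aB n : E3} (hA : Good η A a b cA)
    (hB : Good η B aB b c) {xa xb xc s ya yb yc t : ℝ} (hθ : θ ≤ 1 / 8) (hη : θ ≤ η)
    (hη0 : 0 < η)
    (hcA : cA = c + (xa • a + xb • b + xc • c) + s • n) (hx : xa + xb + xc = 0)
    (haB : aB = a + (ya • a + yb • b + yc • c) + t • n) (hy : ya + yb + yc = 0)
    (h1 : |xa| ≤ θ) (h3 : |xc| ≤ θ) (h4 : |ya| ≤ θ) (h6 : |yc| ≤ θ)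
    (hst : 0 ≤ s * t) : IntersectBadly A B := by
  obtain ⟨z, u, hz, hu, hzu, he⟩ : ∃ z u : ℝ, 0 ≤ z ∧ 0 ≤ u ∧ z + u = 1 / 2 ∧ z * s = u * t := by
    by_cases h0 : s + t = 0
    · have : s = -t := by linarith
      subst this
      have : t = 0 := by nlinarith
      subst this
      exact ⟨1 / 4, 1 / 4, by norm_num, by norm_num, by norm_num, by ring⟩
    · have hp : 0 < (s + t) ^ 2 := by positivity
      refine ⟨t * (s + t) / (2 * (s + t) ^ 2), s * (s + t) / (2 * (s + t) ^ 2),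
        div_nonneg (by nlinarith) (by positivity), div_nonneg (by nlinarith) (by positivity), ?_, ?_⟩
      · field_simp; ring
      · ring
  rw [abs_le] at h1 h3 h4 h6
  have m1 := hA.2.2.2 (u * (1 + ya) - z * xa) (1 - (u * (1 + ya) - z * xa) - z) z (by ring)
    (by nlinarith) (by nlinarith) (by nlinarith) (by nlinarith) (by nlinarith) (by nlinarith)
  have m2 := hB.2.2.2 u (1 - u - (z * (1 + xc) - u * yc)) (z * (1 + xc) - u * yc) (by ring)
    (by nlinarith) (by nlinarith) (by nlinarith) (by nlinarith) (by nlinarith) (by nlinarith)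
  refine bad_of hA.2.1 hB.2.1 m1 ?_
  convert m2 using 1
  obtain rfl : xb = -xa - xc := by linarith
  obtain rfl : yb = -ya - yc := by linarith
  rw [hcA, haB]
  match_scalars <;> linarith

lemma decomp {P Q : E3} {K : ℝ} (hK : 0 ≤ K)
    (hb : ∀ x y : ℝ, |x| ≤ K * ‖x • P + y • Q‖ ∧ |y| ≤ K * ‖x • P + y • Q‖) :
    ∃ n : E3, ∀ e : E3, ∃ x y s : ℝ, e = x • P + y • Q + s • n ∧ |x| ≤ K * ‖e‖ ∧ |y| ≤ K * ‖e‖ := by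
  have hli : LinearIndependent ℝ ![P, Q] := by
    rw [LinearIndependent.pair_iff]
    intro s t hst
    have := hb s t
    rw [hst] at this
    simpa using this
  have hfr := finrank_span_eq_card hli
  have hsum := Submodule.finrank_add_finrank_orthogonal (Submodule.span ℝ (Set.range ![P, Q]))
  rw [hfr] at hsum
  simp only [Fintype.card_fin, finrank_euclideanSpace] at hsum
  have h1 : Module.finrank ℝ (Submodule.span ℝ (Set.range ![P, Q]))ᗮ = 1 := by omega
  obtain ⟨n, -, hn⟩ := finrank_eq_one_iff'.1 h1
  refine ⟨n, fun e => ?_⟩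
  obtain ⟨y, hy, z, hz, hyz⟩ := (Submodule.span ℝ (Set.range ![P, Q])).exists_add_mem_mem_orthogonal e
  obtain ⟨s, hs⟩ := hn ⟨z, hz⟩
  have hs' : s • (n : E3) = z := congrArg Subtype.val hs
  have hin : inner ℝ y z = 0 := hz y hy
  have hno := norm_add_sq_eq_norm_sq_add_norm_sq_of_inner_eq_zero y z hin
  have hle : ‖y‖ ≤ ‖e‖ := by
    rw [hyz]
    nlinarith [norm_nonneg y, norm_nonneg z, norm_nonneg (y + z), mul_self_nonneg ‖z‖]
  simp only [Matrix.range_cons, Matrix.range_empty, Set.union_empty, Set.singleton_union] at hy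
  obtain ⟨a, b, hab⟩ := Submodule.mem_span_pair.1 hy
  obtain ⟨k1, k2⟩ := hb a b
  rw [hab] at k1 k2
  refine ⟨a, b, s, by rw [hab, hs', hyz], k1.trans (by gcongr), k2.trans (by gcongr)⟩

lemma diffb {l l' d N M : ℝ} {h h' : E3} (hl : 0 ≤ l') (h1 : |l - l'| ≤ N) (h2 : ‖h‖ ≤ M)
    (h3 : ‖h - h'‖ ≤ d) : ‖l • h - l' • h'‖ ≤ N * M + l' * d := by
  have : l • h - l' • h' = (l - l') • h + l' • (h - h') := by module
  rw [this]
  refine (norm_add_le _ _).trans ?_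
  rw [norm_smul, norm_smul, norm_eq_abs, norm_eq_abs, abs_of_nonneg hl]
  have := norm_nonneg h
  have := (abs_nonneg (l - l')).trans h1
  gcongr

set_option maxHeartbeats 2000000 in
lemma noacc {η M G δ : ℝ} (hη : 0 < η) (hM : 1 ≤ M) (hG : 1 ≤ G) (hδ : 0 < δ)
    (hδ1 : 80 * G ^ 2 * M * δ ≤ 1 / 8) (hδ2 : 80 * G ^ 2 * M * δ ≤ η)
    {A B C : Finset E3} {a b c cA aB bC : E3} {lA lB lC : ℝ} {hA kA hB kB hC kC : E3}
    (gA : Good η A a b cA) (gB : Good η B aB b c) (gC : Good η C a bC c)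
    (pA : 0 < lA) (pB : 0 < lB) (pC : 0 < lC)
    (eA : b - a = lA • hA) (eA' : cA - a = lA • kA)
    (eB : b - aB = lB • hB) (eB' : c - aB = lB • kB)
    (eC : bC - a = lC • hC) (eC' : c - a = lC • kC)
    (nhA : ‖hA‖ ≤ M) (nkA : ‖kA‖ ≤ M)
    (fA : ∀ x y : ℝ, |x| ≤ G * ‖x • hA + y • kA‖ ∧ |y| ≤ G * ‖x • hA + y • kA‖)
    (d1 : ‖hA - hB‖ ≤ δ) (d2 : ‖hC - hA‖ ≤ δ) (d3 : ‖kA - kB‖ ≤ δ) (d4 : ‖kA - kC‖ ≤ δ) :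
    IntersectBadly A B ∨ IntersectBadly B C ∨ IntersectBadly A C := by
  have hGd : G * δ ≤ 1 / 640 := by
    have h1 : G * δ * 1 ≤ G * δ * (G * M) := by
      have : 1 ≤ G * M := by nlinarith
      gcongr
    nlinarith
  -- closing the triangle
  have hclose : (lA - lB) • hA + (lB - lC) • kA =
      lB • (kA - kB) - lB • (hA - hB) - lC • (kA - kC) := by
    have : lA • hA + lB • (kB - hB) = lC • kC := by
      rw [smul_sub, ← eA, ← eB, ← eB', ← eC']; abel
    have h2 : lA • hA = lC • kC - lB • (kB - hB) := by rw [← this]; abel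
    rw [sub_smul, h2]; module
  have herr : ‖(lA - lB) • hA + (lB - lC) • kA‖ ≤ δ * (2 * lB + lC) := by
    rw [hclose]
    refine (norm_sub_le _ _).trans ?_
    have q1 := norm_sub_le (lB • (kA - kB)) (lB • (hA - hB))
    rw [norm_smul, norm_smul, norm_eq_abs, abs_of_pos pB] at q1
    rw [norm_smul lC, norm_eq_abs, abs_of_pos pC]
    nlinarith
  obtain ⟨g1, g2⟩ := fA (lA - lB) (lB - lC)
  have herr' : G * ‖(lA - lB) • hA + (lB - lC) • kA‖ ≤ (G * δ) * (2 * lB + lC) := by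
    rw [mul_assoc]; gcongr
  have g1' := g1.trans herr'
  have g2' := g2.trans herr'
  have hGd0 : 0 < G * δ := by positivity
  have hlC : lC ≤ 1.1 * lB := by
    have := (abs_le.1 g2').1
    nlinarith
  have hfin : (G * δ) * (2 * lB + lC) ≤ 4 * (G * δ) * lB := by nlinarith
  have L1 : |lA - lB| ≤ 4 * (G * δ) * lB := g1'.trans hfin
  have L2 : |lB - lC| ≤ 4 * (G * δ) * lB := g2'.trans hfin
  have L3 : |lA - lC| ≤ 8 * (G * δ) * lB := by
    have := abs_add_le (lA - lB) (lB - lC)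
    rw [sub_add_sub_cancel] at this
    linarith
  have hlAB : lB ≤ 2 * lA := by
    have := (abs_le.1 L1).1
    nlinarith
  obtain ⟨D, hD⟩ : ∃ D, D = 10 * G * M * δ := ⟨_, rfl⟩
  have hD0 : 0 < D := by rw [hD]; positivity
  have hDG : 8 * G * D ≤ 1 / 8 := by rw [hD]; linarith
  have hDη : 8 * G * D ≤ η := by rw [hD]; linarith
  have hGM : 1 ≤ G * M := by nlinarith
  have hδGM : δ ≤ G * M * δ := by nlinarith
  have fin1 : ∀ N l : ℝ, N ≤ 8 * (G * δ) * lB → l ≤ 1.1 * lB → N * M + l * δ ≤ D * lB := by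
    intro N l h1 h2
    calc N * M + l * δ ≤ 8 * (G * δ) * lB * M + (1.1 * lB) * (G * M * δ) := by gcongr
      _ ≤ D * lB := by
        rw [hD]
        have : 0 < G * M * δ * lB := by positivity
        nlinarith
  have EA : ‖cA - c‖ ≤ D * lB := by
    have : cA - c = lA • kA - lC • kC := by rw [← eA', ← eC']; abel
    rw [this]
    exact (diffb pC.le L3 nkA d4).trans (fin1 _ _ le_rfl hlC)
  have EB : ‖aB - a‖ ≤ D * lB := by
    have : aB - a = lA • hA - lB • hB := by rw [← eA, ← eB]; abel
    rw [this]
    exact (diffb pB.le L1 nhA d1).trans (fin1 _ _ (by nlinarith) (by linarith))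
  have EC : ‖bC - b‖ ≤ D * lB := by
    have : bC - b = -(lA • hA - lC • hC) := by rw [← eA, ← eC]; abel
    rw [this, norm_neg]
    exact (diffb pC.le L3 nhA (by rwa [norm_sub_rev])).trans (fin1 _ _ le_rfl hlC)
  have hKb : ∀ x y : ℝ, |x| ≤ 2 * G / lA * ‖x • (b - a) + y • (c - a)‖ ∧
      |y| ≤ 2 * G / lA * ‖x • (b - a) + y • (c - a)‖ := by
    intro x y
    obtain ⟨f1, f2⟩ := fA x y
    have e1 : lA • (x • hA + y • kA) = (x • (b - a) + y • (c - a)) + y • (cA - c) := by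
      have : lA • (x • hA + y • kA) = x • (lA • hA) + y • (lA • kA) := by module
      rw [this, ← eA, ← eA']; module
    have e2 : lA * ‖x • hA + y • kA‖ ≤ ‖x • (b - a) + y • (c - a)‖ + |y| * (D * lB) := by
      have := congrArg norm e1
      rw [norm_smul, norm_eq_abs, abs_of_pos pA] at this
      rw [this]
      refine (norm_add_le _ _).trans ?_
      rw [norm_smul, norm_eq_abs]
      gcongr
    set N := ‖x • (b - a) + y • (c - a)‖
    have hN : 0 ≤ N := norm_nonneg _
    have e3 : |y| * (D * lB) ≤ |y| * (D * (2 * lA)) := by gcongr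
    have e4 : G * (lA * ‖x • hA + y • kA‖) ≤ G * (N + |y| * (D * (2 * lA))) := by
      gcongr; linarith
    have e5 : G * (|y| * (D * (2 * lA))) ≤ 1 / 2 * (|y| * lA) := by
      have : 0 ≤ |y| * lA := by positivity
      nlinarith
    have hy : |y| * lA ≤ 2 * G * N := by nlinarith
    have hx : |x| * lA ≤ 2 * G * N := by nlinarith
    constructor <;> rw [div_mul_eq_mul_div, le_div_iff₀ pA] <;> assumption
  obtain ⟨n, hn⟩ := decomp (by positivity) hKb
  have small : ∀ e : E3, ‖e‖ ≤ D * lB → ∃ xa xb xc s : ℝ,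
      e = (xa • a + xb • b + xc • c) + s • n ∧ xa + xb + xc = 0 ∧ |xa| ≤ 8 * G * D ∧
      |xb| ≤ 8 * G * D ∧ |xc| ≤ 8 * G * D := by
    intro e he
    obtain ⟨x, y, s, hxy, h1, h2⟩ := hn e
    have hb : 2 * G / lA * ‖e‖ ≤ 4 * G * D := by
      calc 2 * G / lA * ‖e‖ ≤ 2 * G / lA * (D * (2 * lA)) := by
            gcongr; exact he.trans (by gcongr)
        _ = 4 * G * D := by field_simp; ring
    have hGD : 0 < G * D := by positivity
    refine ⟨-x - y, x, y, s, by rw [hxy]; module, by ring, ?_, by linarith, by linarith⟩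
    have := abs_sub (-x) y
    rw [abs_neg] at this
    linarith
  obtain ⟨a1, a2, a3, s1, u1, u2, u3, u4, u5⟩ := small _ EA
  obtain ⟨b1, b2, b3, s2, v1, v2, v3, v4, v5⟩ := small _ EB
  obtain ⟨c1, c2, c3, s3, w1, w2, w3, w4, w5⟩ := small _ EC
  rw [sub_eq_iff_eq_add] at u1 v1 w1
  have hsign : 0 ≤ s1 * s2 ∨ 0 ≤ s2 * s3 ∨ 0 ≤ s1 * s3 := by
    by_contra! h
    obtain ⟨h1, h2, h3⟩ := h
    have := mul_pos_of_neg_of_neg h1 h2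
    nlinarith [sq_nonneg s2]
  rcases hsign with h | h | h
  · left
    exact core_s10 gA gB hDG hDη hη (n := n) (by rw [u1]; module) u2 (by rw [v1]; module) v2
      u3 u5 v3 v5 h
  · right; left
    -- common vertex c
    exact core_s10 (a := b) (b := c) (c := a) gB.rot (gC.rot) hDG hDη hη (n := n)
      (xa := b2) (xb := b3) (xc := b1) (ya := c2) (yb := c3) (yc := c1)
      (by rw [v1]; module) (by linarith) (by rw [w1]; module) (by linarith)
      v4 v3 w4 w3 h
  · right; right
    exact core_s10 (a := b) (b := a) (c := c) gA.swap gC.swap hDG hDη hη (n := n)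
      (xa := a2) (xb := a1) (xc := a3) (ya := c2) (yb := c1) (yc := c3)
      (by rw [u1]; module) (by linarith) (by rw [w1]; module) (by linarith)
      u4 u5 w4 w5 h

open SimpleGraph TripartiteFromTriangles in
lemma classb (ε : ℝ) (hε : 0 < ε) : ∃ N : ℕ, ∀ n : ℕ, N ≤ n →
    ∀ (S : Finset E3) (T : Finset (Finset E3)), S.card = n →
    ∀ (p q r : Finset E3 → E3), (∀ H ∈ T, p H ∈ S ∧ q H ∈ S ∧ r H ∈ S) →
    (∀ A ∈ T, ∀ B ∈ T, p A = p B → q A = q B → A = B) →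
    (∀ A ∈ T, ∀ B ∈ T, p A = p B → r A = r B → A = B) →
    (∀ A ∈ T, ∀ B ∈ T, q A = q B → r A = r B → A = B) →
    (∀ A ∈ T, ∀ B ∈ T, ∀ C ∈ T, p A = p C → q A = q B → r B = r C → A = B ∨ B = C ∨ A = C) →
    (T.card : ℝ) ≤ ε * (n : ℝ) ^ 2 := by
  classical
  have hb := triangleRemovalBound_pos (show 0 < ε / 9 by positivity)
  set β := triangleRemovalBound (ε / 9)
  obtain ⟨N, hN⟩ := exists_nat_gt (1 / (27 * β))
  refine ⟨N + 1, fun n hn S T hS p q r hm hpq hpr hqr hacc => ?_⟩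
  by_contra! hcon
  have hnN : 1 < 27 * β * n := by
    have : (N : ℝ) < n := by exact_mod_cast hn
    have := hN.trans this
    rwa [div_lt_iff₀ (by positivity), mul_comm] at this
  let f : T → S × S × S := fun H =>
    (⟨p H, (hm H H.2).1⟩, ⟨q H, (hm H H.2).2.1⟩, ⟨r H, (hm H H.2).2.2⟩)
  have hf : Function.Injective f := by
    intro A B h
    simp only [f, Prod.mk.injEq, Subtype.mk.injEq] at h
    exact Subtype.ext (hpq A A.2 B B.2 h.1 h.2.1)
  let t : Finset (S × S × S) := Finset.univ.image f
  have ht : t.card = T.card := by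
    rw [Finset.card_image_of_injective _ hf]; simp
  have hmem : ∀ {a b c : S}, (a, b, c) ∈ t → ∃ H ∈ T, p H = a ∧ q H = b ∧ r H = c := by
    intro a b c h
    obtain ⟨H, -, hH⟩ := Finset.mem_image.1 h
    simp only [f, Prod.mk.injEq] at hH
    obtain ⟨rfl, rfl, rfl⟩ := hH
    exact ⟨H, H.2, rfl, rfl, rfl⟩
  haveI : ExplicitDisjoint t := by
    refine ⟨?_, ?_, ?_⟩
    · intro a b c a' h1 h2
      obtain ⟨A, hA, A1, A2, A3⟩ := hmem h1
      obtain ⟨B, hB, B1, B2, B3⟩ := hmem h2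
      have := hqr A hA B hB (A2.trans B2.symm) (A3.trans B3.symm)
      subst this
      exact Subtype.ext (A1.symm.trans B1)
    · intro a b c b' h1 h2
      obtain ⟨A, hA, A1, A2, A3⟩ := hmem h1
      obtain ⟨B, hB, B1, B2, B3⟩ := hmem h2
      have := hpr A hA B hB (A1.trans B1.symm) (A3.trans B3.symm)
      subst this
      exact Subtype.ext (A2.symm.trans B2)
    · intro a b c c' h1 h2
      obtain ⟨A, hA, A1, A2, A3⟩ := hmem h1
      obtain ⟨B, hB, B1, B2, B3⟩ := hmem h2
      have := hpq A hA B hB (A1.trans B1.symm) (A2.trans B2.symm)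
      subst this
      exact Subtype.ext (A3.symm.trans B3)
  haveI : NoAccidental t := by
    refine ⟨?_⟩
    intro a a' b b' c c' h1 h2 h3
    obtain ⟨B, hB, B1, B2, B3⟩ := hmem h1
    obtain ⟨C, hC, C1, C2, C3⟩ := hmem h2
    obtain ⟨A, hA, A1, A2, A3⟩ := hmem h3
    rcases hacc A hA B hB C hC (A1.trans C1.symm) (A2.trans B2.symm) (B3.trans C3.symm) with
      h | h | h
    · subst h
      left; exact Subtype.ext (A1.symm.trans B1)
    · subst h
      left; exact Subtype.ext (C1.symm.trans B1)
    · subst h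
      right; left; exact Subtype.ext (A2.symm.trans C2)
  have hfar : (graph t).FarFromTriangleFree (ε / 9) := by
    apply farFromTriangleFree
    rw [ht]
    simp only [Fintype.card_coe, hS]
    push_cast
    nlinarith
  have h1 := hfar.le_card_cliqueFinset
  have hct := card_triangles t
  have h1 : triangleRemovalBound (ε / 9) * ((Fintype.card (S ⊕ S ⊕ S) : ℕ) : ℝ) ^ 3 ≤ (T.card : ℝ) := by
    rw [← ht, ← hct]
    convert h1
  simp only [Fintype.card_sum, Fintype.card_coe, hS] at h1
  push_cast at h1
  have h2 : T.card ≤ n ^ 2 := by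
    have : T.card ≤ (S ×ˢ S).card := by
      refine Finset.card_le_card_of_injOn (fun H => (p H, q H)) ?_ ?_
      · intro H hH
        simpa using ⟨(hm H hH).1, (hm H hH).2.1⟩
      · intro A hA B hB h
        simp only [Prod.mk.injEq] at h
        exact hpq A hA B hB h.1 h.2
    rw [Finset.card_product, hS] at this
    nlinarith
  have h2' : (T.card : ℝ) ≤ (n : ℝ) ^ 2 := by exact_mod_cast h2
  have hn0 : (0 : ℝ) < n := by
    have : 0 < n := by omega
    exact_mod_cast this
  have h3 : β * ((n : ℝ) + (n + n)) ^ 3 = (27 * β * n) * (n : ℝ) ^ 2 := by ring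
  have h4 : β * ((n : ℝ) + (n + n)) ^ 3 ≤ (n : ℝ) ^ 2 := le_trans h1 h2'
  rw [h3] at h4
  have : 0 < (n : ℝ) ^ 2 := by positivity
  nlinarith

theorem stmt10 (c α : ℝ) (hc : 1 ≤ c) (hα₀ : 0 < α) (hα₁ : α < π / 2) :
    ∀ ε : ℝ, 0 < ε → ∃ N : ℕ, ∀ n : ℕ, N ≤ n →
      ∀ (S : Finset E3) (T : Finset (Finset E3)), S.card = n →
        (∀ H ∈ T, H ⊆ S ∧ IsFatHexagonSet c α H) →
        (∀ H₁ ∈ T, ∀ H₂ ∈ T, H₁ ≠ H₂ → ¬ IntersectBadly H₁ H₂) →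
        (T.card : ℝ) ≤ ε * (n : ℝ) ^ 2 := by
  intro ε hε
  classical
  have hc0 : 0 < c := by linarith
  have hsin : 0 < sin α := sin_pos_of_pos_of_lt_pi hα₀ (by linarith)
  obtain ⟨η, hηe⟩ : ∃ η, η = sin α / (4 * c ^ 4) / (8 * (1 + c ^ 4 / sin α)) := ⟨_, rfl⟩
  obtain ⟨M, hMe⟩ : ∃ M, M = 2 * c := ⟨_, rfl⟩
  obtain ⟨G, hGe⟩ : ∃ G, G = 2 * c ^ 3 / sin α := ⟨_, rfl⟩
  have hη : 0 < η := by rw [hηe]; positivity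
  have hM : 1 ≤ M := by linarith
  have hG : 1 ≤ G := by
    rw [hGe, le_div_iff₀ hsin]
    have := sin_le_one α
    have : 1 ≤ c ^ 3 := one_le_pow₀ hc
    linarith
  obtain ⟨δ, hδ, hδ1, hδ2⟩ : ∃ δ : ℝ, 0 < δ ∧ 80 * G ^ 2 * M * δ ≤ 1 / 8 ∧
      80 * G ^ 2 * M * δ ≤ η := by
    have hp : 0 < 80 * G ^ 2 * M := by positivity
    refine ⟨min (1 / 8) η / (80 * G ^ 2 * M), by positivity, ?_, ?_⟩
    · rw [mul_div_cancel₀ _ hp.ne']; exact min_le_left _ _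
    · rw [mul_div_cancel₀ _ hp.ne']; exact min_le_right _ _
  obtain ⟨F, -, hF, hcov⟩ := (isCompact_closedBall (0 : E3 × E3) M).finite_cover_balls
    (show 0 < δ / 2 by positivity)
  lift F to Finset (E3 × E3) using hF
  obtain ⟨N, hN⟩ := classb (ε / (F.card + 1)) (by positivity)
  refine ⟨N, fun n hn S T hS hT hbad => ?_⟩
  have hex1 : ∀ H : Finset E3, ∃ (p q r : E3) (L : ℝ) (x : E3 × E3), H ∈ T →
      FatT η M G (H : Set E3) p q r L ∧ x ∈ F ∧
      dist (L⁻¹ • (q - p), L⁻¹ • (r - p)) x < δ / 2 := by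
    intro H
    by_cases hH : H ∈ T
    · obtain ⟨p, q, r, L, hf⟩ := hexset hc hα₀ hα₁ (hT H hH).2
      rw [← hηe, ← hMe, ← hGe] at hf
      obtain ⟨hgood, hL, h1, h2, h3⟩ := hf
      have hin : ((L⁻¹ • (q - p), L⁻¹ • (r - p)) : E3 × E3) ∈ Metric.closedBall (0 : E3 × E3) M := by
        rw [mem_closedBall_zero_iff, Prod.norm_def]
        refine max_le ?_ ?_ <;>
        · simp only [norm_smul, norm_inv, norm_eq_abs, abs_of_pos hL]
          rw [inv_mul_le_iff₀ hL, mul_comm]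
          assumption
      have := hcov hin
      simp only [Set.mem_iUnion, Metric.mem_ball, Finset.mem_coe] at this
      obtain ⟨x, hx, hd⟩ := this
      exact ⟨p, q, r, L, x, fun _ => ⟨⟨hgood, hL, h1, h2, h3⟩, hx, hd⟩⟩
    · exact ⟨0, 0, 0, 0, 0, fun h => absurd h hH⟩
  choose p q r L x hall using hex1
  have hclass : ∀ y ∈ F, (((T.filter (fun H => x H = y)).card : ℕ) : ℝ) ≤
      ε / (F.card + 1) * (n : ℝ) ^ 2 := by
    intro y hy
    refine hN n hn S _ hS p q r ?_ ?_ ?_ ?_ ?_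
    · intro H hH
      have hHT := (Finset.mem_filter.1 hH).1
      obtain ⟨⟨⟨h1, h2, h3, -⟩, -⟩, -⟩ := hall H hHT
      have hs := (hT H hHT).1
      exact ⟨hs h1, hs h2, hs h3⟩
    · intro A hA B hB h1 h2
      have hA := (Finset.mem_filter.1 hA).1
      have hB := (Finset.mem_filter.1 hB).1
      by_contra hne
      have gA := (hall A hA).1.1
      have gB := (hall B hB).1.1
      rw [← h1, ← h2] at gB
      exact hbad A hA B hB hne (bad_edge hη gA gB)
    · intro A hA B hB h1 h2
      have hA := (Finset.mem_filter.1 hA).1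
      have hB := (Finset.mem_filter.1 hB).1
      by_contra hne
      have gA := (hall A hA).1.1
      have gB := (hall B hB).1.1
      rw [← h1, ← h2] at gB
      exact hbad A hA B hB hne (bad_edge hη gA.rot.rot gB.rot.rot)
    · intro A hA B hB h1 h2
      have hA := (Finset.mem_filter.1 hA).1
      have hB := (Finset.mem_filter.1 hB).1
      by_contra hne
      have gA := (hall A hA).1.1
      have gB := (hall B hB).1.1
      rw [← h1, ← h2] at gB
      exact hbad A hA B hB hne (bad_edge hη gA.rot gB.rot)
    · intro A hA B hB C hC h1 h2 h3
      obtain ⟨hA, xA⟩ := Finset.mem_filter.1 hA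
      obtain ⟨hB, xB⟩ := Finset.mem_filter.1 hB
      obtain ⟨hC, xC⟩ := Finset.mem_filter.1 hC
      by_contra! hne
      obtain ⟨ne1, ne2, ne3⟩ := hne
      obtain ⟨⟨gA, lA, nA, nA', fA⟩, -, dA⟩ := hall A hA
      obtain ⟨⟨gB, lB, nB, nB', fB⟩, -, dB⟩ := hall B hB
      obtain ⟨⟨gC, lC, nC, nC', fC⟩, -, dC⟩ := hall C hC
      rw [xA] at dA
      rw [xB] at dB
      rw [xC] at dC
      have hAB := (dist_triangle_right _ _ y).trans (add_le_add dA.le dB.le)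
      have hAC := (dist_triangle_right _ _ y).trans (add_le_add dA.le dC.le)
      rw [add_halves, Prod.dist_eq, max_le_iff] at hAB hAC
      simp only [dist_eq_norm] at hAB hAC
      have e : ∀ (l : ℝ) (v : E3), 0 < l → v = l • (l⁻¹ • v) := by
        intro l v hl
        rw [smul_inv_smul₀ hl.ne']
      have nn : ∀ (l : ℝ) (v : E3), 0 < l → ‖v‖ ≤ M * l → ‖l⁻¹ • v‖ ≤ M := by
        intro l v hl hv
        rw [norm_smul, norm_inv, norm_eq_abs, abs_of_pos hl, inv_mul_le_iff₀ hl, mul_comm]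
        exact hv
      have gB' := gB
      have gC' := gC
      rw [← h2] at gB'
      rw [← h1, ← h3] at gC'
      have fA' : ∀ x y : ℝ,
          |x| ≤ G * ‖x • ((L A)⁻¹ • (q A - p A)) + y • ((L A)⁻¹ • (r A - p A))‖ ∧
          |y| ≤ G * ‖x • ((L A)⁻¹ • (q A - p A)) + y • ((L A)⁻¹ • (r A - p A))‖ := by
        intro x y
        have : x • ((L A)⁻¹ • (q A - p A)) + y • ((L A)⁻¹ • (r A - p A)) =
          (L A)⁻¹ • (x • (q A - p A) + y • (r A - p A)) := by module
        rw [this, norm_smul, norm_inv, norm_eq_abs, abs_of_pos lA]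
        obtain ⟨f1, f2⟩ := fA x y
        rw [show G * ((L A)⁻¹ * ‖x • (q A - p A) + y • (r A - p A)‖) =
          (G * ‖x • (q A - p A) + y • (r A - p A)‖) / L A by ring]
        constructor <;> rw [le_div_iff₀ lA] <;> assumption
      have key := noacc hη hM hG hδ hδ1 hδ2 gA gB' gC' lA lB lC (e _ _ lA) (e _ _ lA)
        (hB := (L B)⁻¹ • (q B - p B)) (by rw [h2]; exact e _ _ lB) (e _ _ lB)
        (hC := (L C)⁻¹ • (q C - p C)) (by rw [h1]; exact e _ _ lC)
        (kC := (L C)⁻¹ • (r C - p C)) (by rw [h1, h3]; exact e _ _ lC)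
        (nn _ _ lA nA) (nn _ _ lA nA') fA' hAB.1 (by rw [norm_sub_rev]; exact hAC.1) hAB.2 hAC.2
      rcases key with k | k | k
      · exact hbad A hA B hB ne1 k
      · exact hbad B hB C hC ne2 k
      · exact hbad A hA C hC ne3 k
  have hcard := Finset.card_eq_sum_card_fiberwise (f := x) (s := T) (t := F)
    (fun H hH => (hall H hH).2.1)
  rw [hcard]
  push_cast
  calc _ ≤ ∑ y ∈ F, ε / (F.card + 1) * (n : ℝ) ^ 2 := Finset.sum_le_sum hclass
    _ = F.card / (F.card + 1) * (ε * (n : ℝ) ^ 2) := by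
      rw [Finset.sum_const, nsmul_eq_mul]; ring
    _ ≤ 1 * (ε * (n : ℝ) ^ 2) := by
      gcongr
      rw [div_le_one (by positivity)]; linarith
    _ = _ := one_mul _
end
end

section
/- Let k ≥ 4 and let S be a set of n points in ℝ³. If T is a family of k-gons on S such that no two k-gons of T intersect badly, then no two distinct k-gons of T share a diagonal (a pair of vertices common to both polygons and non-adjacent in both), and consequently |T| ≤ (n choose 2) / (k(k−3)/2). -/
open EuclideanGeometry

noncomputable section

attribute [local instance] Classical.propDecidable

/-- Two vertices of a convex polygon are non-adjacent if the open segment between them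
meets the relative interior of the polygon's convex hull (i.e. it is a diagonal). -/
def NonAdjacentIn (P : Finset E3) (u v : E3) : Prop :=
  (openSegment ℝ u v ∩ intrinsicInterior ℝ (convexHull ℝ (P : Set E3))).Nonempty

/-- Two polygons share a diagonal: a pair of distinct vertices common to both polygons
which are non-adjacent in both. -/
def ShareDiagonal (P Q : Finset E3) : Prop :=
  ∃ u v : E3, u ≠ v ∧ u ∈ P ∧ v ∈ P ∧ u ∈ Q ∧ v ∈ Q ∧
    NonAdjacentIn P u v ∧ NonAdjacentIn Q u v

theorem mem_relint_iff {C : Set E3} {x : E3} :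
    x ∈ intrinsicInterior ℝ C ↔ x ∈ affineSpan ℝ C ∧ ∃ ε > 0, ∀ z ∈ affineSpan ℝ C,
      dist z x < ε → z ∈ C := by
  rw [mem_intrinsicInterior]
  constructor
  · rintro ⟨y, hy, rfl⟩
    refine ⟨y.2, ?_⟩
    rw [mem_interior_iff_mem_nhds, Metric.mem_nhds_iff] at hy
    obtain ⟨ε, hε, h⟩ := hy
    exact ⟨ε, hε, fun z hz hd => h (show (⟨z, hz⟩ : affineSpan ℝ C) ∈ Metric.ball y ε from hd)⟩
  · rintro ⟨hx, ε, hε, h⟩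
    refine ⟨⟨x, hx⟩, ?_, rfl⟩
    rw [mem_interior_iff_mem_nhds, Metric.mem_nhds_iff]
    exact ⟨ε, hε, fun z hz => h z z.2 hz⟩

theorem relint_combo {C : Set E3} (hC : Convex ℝ C) {y z : E3}
    (hy : y ∈ intrinsicInterior ℝ C) (hz : z ∈ C) {t : ℝ} (h0 : 0 ≤ t) (h1 : t < 1) :
    (1 - t) • y + t • z ∈ intrinsicInterior ℝ C := by
  have hyC := intrinsicInterior_subset hy
  rw [mem_relint_iff] at hy ⊢
  obtain ⟨hyA, ε, hε, h⟩ := hy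
  have hw : (1 - t) • y + t • z ∈ C := hC hyC hz (by linarith) h0 (by ring)
  refine ⟨subset_affineSpan ℝ C hw, (1 - t) * ε, by nlinarith, ?_⟩
  intro w' hw' hd
  have ht : 0 < 1 - t := by linarith
  have hy' : y + (1 - t)⁻¹ • (w' - ((1 - t) • y + t • z)) ∈ C := by
    apply h
    · have := AffineSubspace.vadd_mem_of_mem_direction
        (Submodule.smul_mem _ (1 - t)⁻¹
          (AffineSubspace.vsub_mem_direction hw' (subset_affineSpan ℝ C hw))) hyA
      simpa [add_comm] using this
    · rw [dist_eq_norm] at hd ⊢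
      rw [add_sub_cancel_left, norm_smul, Real.norm_of_nonneg (by positivity),
        inv_mul_lt_iff₀ ht]
      exact hd
  have := hC hy' hz ht.le h0 (by ring)
  convert this using 1
  rw [smul_add, smul_smul, mul_inv_cancel₀ ht.ne']
  module

theorem relint_openSegment {C : Set E3} (hC : Convex ℝ C) {y z x : E3}
    (hy : y ∈ intrinsicInterior ℝ C) (hz : z ∈ C) (hx : x ∈ openSegment ℝ y z) :
    x ∈ intrinsicInterior ℝ C := by
  obtain ⟨a, b, ha, hb, hab, rfl⟩ := hx
  have : a = 1 - b := by linarith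
  subst this
  exact relint_combo hC hy hz hb.le (by linarith)

/-- The whole open diagonal lies in the relative interior. -/
theorem diag_relint {P : Finset E3} {u v : E3} (hu : u ∈ P) (hv : v ∈ P)
    (h : NonAdjacentIn P u v) :
    (1 / 2 : ℝ) • u + (1 / 2 : ℝ) • v ∈ intrinsicInterior ℝ (convexHull ℝ (P : Set E3)) := by
  obtain ⟨x, ⟨a, b, ha, hb, hab, rfl⟩, hx⟩ := h
  have huC : u ∈ convexHull ℝ (P : Set E3) := subset_convexHull ℝ _ hu
  have hvC : v ∈ convexHull ℝ (P : Set E3) := subset_convexHull ℝ _ hv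
  have hC := convex_convexHull ℝ (P : Set E3)
  have hab' : a = 1 - b := by linarith
  subst hab'
  rcases le_total b (1 / 2) with hb2 | hb2
  · -- move towards v
    have h1 : (0 : ℝ) < 1 - b := ha
    have := relint_combo hC hx hvC (t := (1 / 2 - b) / (1 - b))
      (div_nonneg (by linarith) h1.le) (by rw [div_lt_one h1]; linarith)
    convert this using 1
    have e1 : (1 - (1 / 2 - b) / (1 - b)) * (1 - b) = 1 / 2 := by field_simp; ring
    have e2 : (1 - (1 / 2 - b) / (1 - b)) * b + (1 / 2 - b) / (1 - b) = 1 / 2 := by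
      field_simp; ring
    rw [smul_add, smul_smul, smul_smul, add_assoc, ← add_smul, e1, e2]
  · have := relint_combo hC hx huC (t := (b - 1 / 2) / b)
      (div_nonneg (by linarith) hb.le) (by rw [div_lt_one hb]; linarith)
    convert this using 1
    have e1 : (1 - (b - 1 / 2) / b) * b = 1 / 2 := by field_simp; ring
    have e2 : (1 - (b - 1 / 2) / b) * (1 - b) + (b - 1 / 2) / b = 1 / 2 := by
      field_simp; ring
    rw [smul_add, smul_smul, smul_smul, add_right_comm, ← add_smul, e1, e2]

theorem no_share {P Q : Finset E3} (h : ¬ IntersectBadly P Q) : ¬ ShareDiagonal P Q := by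
  rintro ⟨u, v, -, huP, hvP, huQ, hvQ, hP, hQ⟩
  apply h
  have h1 := diag_relint huP hvP hP
  have h2 := diag_relint huQ hvQ hQ
  exact ⟨⟨u, huP, huQ, subset_convexHull ℝ _ huP, subset_convexHull ℝ _ huQ⟩,
    ⟨_, ⟨intrinsicInterior_subset h1, intrinsicInterior_subset h2⟩, h1, h2⟩⟩

theorem cp_not_mem {k : ℕ} {P : Finset E3} (hP : IsKGon k P) {p : E3} (hp : p ∈ P)
    {s : Set E3} (hs : s ⊆ P) (hps : p ∉ s) : p ∉ convexHull ℝ s := by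
  intro h
  refine hP.2.2 p hp (convexHull_mono ?_ h)
  intro q hq
  have : q ≠ p := fun e => hps (e ▸ hq)
  simpa [this] using hs hq

theorem cp_not_wbtw {k : ℕ} {P : Finset E3} (hP : IsKGon k P) {p q r : E3} (hp : p ∈ P)
    (hq : q ∈ P) (hr : r ∈ P) (h1 : p ≠ q) (h2 : q ≠ r) : ¬ Wbtw ℝ p q r := by
  intro h
  refine cp_not_mem hP hq (s := {p, r}) ?_ ?_ ?_
  · rintro x (rfl | rfl) <;> assumption
  · rintro (rfl | rfl)
    · exact h1 rfl
    · exact h2 rfl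
  · rw [convexHull_pair]
    exact h.mem_segment

theorem cp_not_collinear {k : ℕ} {P : Finset E3} (hP : IsKGon k P) {p q r : E3} (hp : p ∈ P)
    (hq : q ∈ P) (hr : r ∈ P) (h1 : p ≠ q) (h2 : q ≠ r) (h3 : p ≠ r) :
    ¬ Collinear ℝ ({p, q, r} : Set E3) := by
  intro h
  rcases h.wbtw_or_wbtw_or_wbtw with h | h | h
  · exact cp_not_wbtw hP hp hq hr h1 h2 h
  · exact cp_not_wbtw hP hq hr hp h2 h3.symm h
  · exact cp_not_wbtw hP hr hp hq h3.symm h1 h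

/-- a point of a segment strictly inside, as affine parameter -/
theorem seg_param {k : ℕ} {P : Finset E3} (hP : IsKGon k P) {u b a c x : E3} (hu : u ∈ P)
    (hb : b ∈ P) (ha : a ∈ P) (hc : c ∈ P) (hua : u ≠ a) (huc : u ≠ c)
    (hba : b ≠ a) (hbc : b ≠ c)
    (h1 : x ∈ convexHull ℝ ({u, b} : Set E3)) (h2 : x ∈ convexHull ℝ ({a, c} : Set E3)) :
    ∃ s : ℝ, 0 < s ∧ s < 1 ∧ x = u + s • (b - u) := by
  rw [convexHull_pair, segment_eq_image'] at h1
  obtain ⟨s, ⟨hs0, hs1⟩, rfl⟩ := h1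
  have hsub : ({a, c} : Set E3) ⊆ P := by rintro x (rfl | rfl) <;> assumption
  refine ⟨s, lt_of_le_of_ne hs0 ?_, lt_of_le_of_ne hs1 ?_, rfl⟩
  · rintro rfl
    simp only [zero_smul, add_zero] at h2
    exact cp_not_mem hP hu hsub (by simp [hua, huc]) h2
  · rintro rfl
    simp only [one_smul, add_sub_cancel] at h2
    exact cp_not_mem hP hb hsub (by simp [hba, hbc]) h2

theorem exists_small {s α : ℝ} (h0 : 0 < s) (h1 : s < 1) :
    ∃ δ > 0, ∀ ε, 0 ≤ ε → ε ≤ δ → 0 ≤ s + ε * α ∧ s + ε * α ≤ 1 := by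
  have hpos : 0 < 1 + |α| := by positivity
  refine ⟨min s (1 - s) / (1 + |α|), div_pos (lt_min h0 (by linarith)) hpos, ?_⟩
  intro ε he hle
  rw [le_div_iff₀ hpos] at hle
  have h2 := min_le_left s (1 - s)
  have h3 := min_le_right s (1 - s)
  have h4 : |ε * α| ≤ ε * (1 + |α|) := by
    rw [abs_mul, abs_of_nonneg he]; nlinarith
  have h5 := abs_le.1 (h4.trans hle)
  constructor <;> linarith [h5.1, h5.2]

theorem cross_nonadj {k : ℕ} {P : Finset E3} (hP : IsKGon k P) {u b a c x : E3} (hu : u ∈ P)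
    (hb : b ∈ P) (ha : a ∈ P) (hc : c ∈ P) (hub : u ≠ b) (hac : a ≠ c)
    (hua : u ≠ a) (huc : u ≠ c) (hba : b ≠ a) (hbc : b ≠ c)
    (h1 : x ∈ convexHull ℝ ({u, b} : Set E3)) (h2 : x ∈ convexHull ℝ ({a, c} : Set E3)) :
    NonAdjacentIn P u b := by
  obtain ⟨s, hs0, hs1, hxs⟩ := seg_param hP hu hb ha hc hua huc hba hbc h1 h2
  obtain ⟨t, ht0, ht1, hxt⟩ :=
    seg_param hP ha hc hu hb hua.symm hba.symm huc.symm hbc.symm h2 h1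
  have hC := convex_convexHull ℝ (P : Set E3)
  have huC : u ∈ convexHull ℝ (P : Set E3) := subset_convexHull ℝ _ hu
  have hbC : b ∈ convexHull ℝ (P : Set E3) := subset_convexHull ℝ _ hb
  have haC : a ∈ convexHull ℝ (P : Set E3) := subset_convexHull ℝ _ ha
  have hcC : c ∈ convexHull ℝ (P : Set E3) := subset_convexHull ℝ _ hc
  have hli : LinearIndependent ℝ ![b - u, c - a] := by
    rw [LinearIndependent.pair_iff]
    intro α β h
    by_cases hα : α = 0
    · subst hα
      simp only [zero_smul, zero_add, smul_eq_zero] at h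
      exact ⟨rfl, h.resolve_right (sub_ne_zero.2 hac.symm)⟩
    · exfalso
      have hbu : b - u = (-(α⁻¹ * β)) • (c - a) := by
        have : α • (b - u) = (-β) • (c - a) := by
          rw [neg_smul]; exact eq_neg_of_add_eq_zero_left h
        rw [← inv_smul_smul₀ hα (b - u), this, smul_smul]; ring_nf
      apply cp_not_collinear hP ha hu hc hua.symm huc hac
      rw [collinear_iff_of_mem (p₀ := a) (by simp)]
      refine ⟨c - a, ?_⟩
      rintro p (rfl | rfl | rfl)
      · exact ⟨0, by simp⟩
      · refine ⟨t - s * (-(α⁻¹ * β)), ?_⟩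
        have e : p + s • (b - p) = a + t • (c - a) := hxs.symm.trans hxt
        rw [hbu, smul_smul] at e
        rw [vadd_eq_add, sub_smul, eq_sub_of_add_eq e]
        abel
      · exact ⟨1, by simp⟩
  have hspan : Submodule.span ℝ (Set.range ![b - u, c - a]) = vectorSpan ℝ (P : Set E3) := by
    apply Submodule.eq_of_le_of_finrank_le
    · rw [Submodule.span_le]
      rintro _ ⟨i, rfl⟩
      fin_cases i
      · exact vsub_mem_vectorSpan ℝ hb hu
      · exact vsub_mem_vectorSpan ℝ hc ha
    · rw [finrank_span_eq_card hli]
      exact hP.2.1.finrank_le_two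
  obtain ⟨y, hy⟩ := Set.Nonempty.intrinsicInterior hC ⟨u, huC⟩
  have hxC : x ∈ convexHull ℝ (P : Set E3) := by
    rw [hxs]; exact hC.add_smul_sub_mem huC hbC ⟨hs0.le, hs1.le⟩
  have hxy : x - y ∈ Submodule.span ℝ {b - u, c - a} := by
    have e : ({b - u, c - a} : Set E3) = Set.range ![b - u, c - a] := by
      simp [Set.pair_comm]
    rw [e, hspan, ← direction_affineSpan, ← affineSpan_convexHull]
    exact AffineSubspace.vsub_mem_direction (subset_affineSpan ℝ _ hxC)
      (subset_affineSpan ℝ _ (intrinsicInterior_subset hy))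
  obtain ⟨α, β, hαβ⟩ := Submodule.mem_span_pair.1 hxy
  obtain ⟨δ₁, hδ₁, H1⟩ := exists_small (α := 2 * α) hs0 hs1
  obtain ⟨δ₂, hδ₂, H2⟩ := exists_small (α := 2 * β) ht0 ht1
  have hε : 0 < min δ₁ δ₂ := lt_min hδ₁ hδ₂
  generalize hεd : min δ₁ δ₂ = ε at hε
  have K1 := H1 ε hε.le (hεd ▸ min_le_left _ _)
  have K2 := H2 ε hε.le (hεd ▸ min_le_right _ _)
  have m1 := hC.add_smul_sub_mem huC hbC K1
  have m2 := hC.add_smul_sub_mem haC hcC K2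
  have m3 := hC m1 m2 (a := 1 / 2) (b := 1 / 2) (by norm_num) (by norm_num) (by norm_num)
  have ez : x + ε • (x - y) = (1 / 2 : ℝ) • (u + (s + ε * (2 * α)) • (b - u)) +
      (1 / 2 : ℝ) • (a + (t + ε * (2 * β)) • (c - a)) := by
    have e1 : x = (1 / 2 : ℝ) • (u + s • (b - u)) + (1 / 2 : ℝ) • (a + t • (c - a)) := by
      rw [← hxs, ← hxt, ← add_smul]; norm_num
    rw [← hαβ]
    nth_rewrite 1 [e1]
    module
  rw [← ez] at m3
  refine ⟨x, ?_, relint_openSegment hC hy m3 ?_⟩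
  · rw [openSegment_eq_image']
    exact ⟨s, ⟨hs0, hs1⟩, hxs.symm⟩
  · have h1e : (1 + ε) ≠ 0 := by positivity
    refine ⟨ε / (1 + ε), 1 / (1 + ε), by positivity, by positivity, by field_simp; ring, ?_⟩
    have e3 : 1 / (1 + ε) * (1 + ε) = 1 := by field_simp
    have : (ε / (1 + ε)) • y + (1 / (1 + ε)) • (x + ε • (x - y))
      = (1 / (1 + ε) * (1 + ε)) • x := by module
    rw [this, e3, one_smul]

theorem forall_four {p : Fin 4 → Prop} : (∀ i, p i) ↔ p 0 ∧ p 1 ∧ p 2 ∧ p 3 :=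
  ⟨fun h => ⟨h 0, h 1, h 2, h 3⟩, fun h i => by
    obtain ⟨h0, h1, h2, h3⟩ := h
    fin_cases i <;> assumption⟩

theorem exists_four {p : Fin 4 → Prop} : (∃ i, p i) ↔ p 0 ∨ p 1 ∨ p 2 ∨ p 3 :=
  ⟨fun ⟨i, h⟩ => by fin_cases i <;> simp_all, by
    rintro (h | h | h | h) <;> exact ⟨_, h⟩⟩

theorem split4 (I : Set (Fin 4)) : (∃ i, I ⊆ {i}) ∨ (∃ i, Iᶜ ⊆ {i}) ∨
    (I ⊆ {0, 1} ∧ Iᶜ ⊆ {2, 3}) ∨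
    (I ⊆ {2, 3} ∧ Iᶜ ⊆ {0, 1}) ∨
    (I ⊆ {0, 2} ∧ Iᶜ ⊆ {1, 3}) ∨
    (I ⊆ {1, 3} ∧ Iᶜ ⊆ {0, 2}) ∨
    (I ⊆ {0, 3} ∧ Iᶜ ⊆ {1, 2}) ∨
    (I ⊆ {1, 2} ∧ Iᶜ ⊆ {0, 3}) := by
  by_cases m0 : (0 : Fin 4) ∈ I <;> by_cases m1 : (1 : Fin 4) ∈ I <;>
    by_cases m2 : (2 : Fin 4) ∈ I <;> by_cases m3 : (3 : Fin 4) ∈ I <;>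
    simp [Set.subset_def, forall_four, exists_four, m0, m1, m2, m3]

theorem three_nbrs {k : ℕ} {P : Finset E3} (hP : IsKGon k P) {u a b c : E3} (hu : u ∈ P)
    (ha : a ∈ P) (hb : b ∈ P) (hc : c ∈ P) (hua : u ≠ a) (hub : u ≠ b) (huc : u ≠ c)
    (hab : a ≠ b) (hac : a ≠ c) (hbc : b ≠ c) :
    NonAdjacentIn P u a ∨ NonAdjacentIn P u b ∨ NonAdjacentIn P u c := by
  have hmem : ∀ i, ![u, a, b, c] i ∈ P := by
    intro i; fin_cases i <;> assumption
  have hinj : Function.Injective ![u, a, b, c] := by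
    intro i j h
    fin_cases i <;> fin_cases j <;> simp_all
  have hna : ¬ AffineIndependent ℝ ![u, a, b, c] := by
    intro h
    have h3 := h.finrank_vectorSpan (n := 3) (by simp)
    have hle : vectorSpan ℝ (Set.range ![u, a, b, c]) ≤ vectorSpan ℝ (P : Set E3) := by
      apply vectorSpan_mono
      rintro _ ⟨i, rfl⟩
      exact hmem i
    have := Submodule.finrank_mono hle
    have := hP.2.1.finrank_le_two
    omega
  obtain ⟨I, x, hx1, hx2⟩ := Convex.radon_partition hna
  -- singletons are impossible
  have key : ∀ (J : Set (Fin 4)) (i : Fin 4), J ⊆ {i} →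
      x ∈ convexHull ℝ (![u, a, b, c] '' J) → x ∈ convexHull ℝ (![u, a, b, c] '' Jᶜ) → False := by
    intro J i hJ h1 h2
    have h1' := convexHull_mono (Set.image_mono hJ) h1
    rw [Set.image_singleton, convexHull_singleton] at h1'
    rcases Set.subset_singleton_iff_eq.1 hJ with rfl | rfl
    · simp at h1
    · rw [Set.mem_singleton_iff] at h1'
      subst h1'
      refine cp_not_mem hP (hmem i) ?_ ?_ h2
      · rintro _ ⟨j, -, rfl⟩; exact hmem j
      · rintro ⟨j, hj, e⟩
        exact hj (hinj e)
  have key2 := fun i h => key I i h hx1 hx2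
  have key3 := fun i h => key Iᶜ i h hx2 (by rwa [compl_compl])
  have main : ∀ J : Set (Fin 4), x ∈ convexHull ℝ (![u, a, b, c] '' J) →
      ∀ p q : Fin 4, J ⊆ {p, q} →
      x ∈ convexHull ℝ {![u, a, b, c] p, ![u, a, b, c] q} := by
    intro J h p q hJ
    have := convexHull_mono (Set.image_mono hJ) h
    rwa [Set.image_pair] at this
  have A : ∀ p q r s : Fin 4, I ⊆ {p, q} → Iᶜ ⊆ {r, s} →
      x ∈ convexHull ℝ {![u, a, b, c] p, ![u, a, b, c] q} ∧
      x ∈ convexHull ℝ {![u, a, b, c] r, ![u, a, b, c] s} := fun p q r s h1 h2 =>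
    ⟨main I hx1 p q h1, main Iᶜ hx2 r s h2⟩
  have ca := fun h1 h2 => cross_nonadj (x := x) hP hu ha hb hc hua hbc hub huc hab hac h1 h2
  have cb := fun h1 h2 => cross_nonadj (x := x) hP hu hb ha hc hub hac hua huc hab.symm hbc h1 h2
  have cc := fun h1 h2 => cross_nonadj (x := x) hP hu hc ha hb huc hab hua hub hac.symm
    hbc.symm h1 h2
  rcases split4 I with ⟨i, h⟩ | ⟨i, h⟩ | ⟨h, h'⟩ | ⟨h, h'⟩ | ⟨h, h'⟩ | ⟨h, h'⟩ | ⟨h, h'⟩ | ⟨h, h'⟩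
  · exact (key2 i h).elim
  · exact (key3 i h).elim
  · exact Or.inl (ca (A 0 1 2 3 h h').1 (A 0 1 2 3 h h').2)
  · exact Or.inl (ca (A 2 3 0 1 h h').2 (A 2 3 0 1 h h').1)
  · exact Or.inr (Or.inl (cb (A 0 2 1 3 h h').1 (A 0 2 1 3 h h').2))
  · exact Or.inr (Or.inl (cb (A 1 3 0 2 h h').2 (A 1 3 0 2 h h').1))
  · exact Or.inr (Or.inr (cc (A 0 3 1 2 h h').1 (A 0 3 1 2 h h').2))
  · exact Or.inr (Or.inr (cc (A 1 2 0 3 h h').2 (A 1 2 0 3 h h').1))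

/-- ordered diagonals -/
def diags (P : Finset E3) : Finset (E3 × E3) :=
  P.offDiag.filter fun p => NonAdjacentIn P p.1 p.2

theorem card_diags {k : ℕ} (hk : 4 ≤ k) {P : Finset E3} (hP : IsKGon k P) :
    k * (k - 3) ≤ (diags P).card := by
  have h1 : ∀ u ∈ P, k - 3 ≤ ((P.erase u).filter fun v => NonAdjacentIn P u v).card := by
    intro u hu
    have hsum := Finset.card_filter_add_card_filter_not (s := P.erase u)
      (fun v => NonAdjacentIn P u v)
    rw [Finset.card_erase_of_mem hu, hP.1] at hsum
    have : ((P.erase u).filter fun v => ¬ NonAdjacentIn P u v).card ≤ 2 := by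
      by_contra hlt
      obtain ⟨a, ha, b, hb, c, hc, hab, hac, hbc⟩ := Finset.two_lt_card.1 (not_le.1 hlt)
      simp only [Finset.mem_filter, Finset.mem_erase] at ha hb hc
      rcases three_nbrs hP hu ha.1.2 hb.1.2 hc.1.2 ha.1.1.symm hb.1.1.symm hc.1.1.symm
        hab hac hbc with h | h | h
      · exact ha.2 h
      · exact hb.2 h
      · exact hc.2 h
    omega
  have h2 : (diags P).card =
      ∑ u ∈ P, ((P.erase u).filter fun v => NonAdjacentIn P u v).card := by
    rw [Finset.card_eq_sum_card_fiberwise (f := Prod.fst) (t := P)]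
    · refine Finset.sum_congr rfl fun u hu => ?_
      symm
      apply Finset.card_bij (fun v _ => (u, v))
      · intro v hv
        simp only [Finset.mem_filter, Finset.mem_erase] at hv
        simp only [diags, Finset.mem_filter, Finset.mem_offDiag]
        exact ⟨⟨⟨hu, hv.1.2, hv.1.1.symm⟩, hv.2⟩, trivial⟩
      · intro v _ w _ h
        exact (Prod.mk.inj h).2
      · rintro ⟨p, q⟩ h
        simp only [diags, Finset.mem_filter, Finset.mem_offDiag] at h
        obtain ⟨⟨⟨hp, hq, hpq⟩, hn⟩, rfl⟩ := h
        exact ⟨q, by simp only [Finset.mem_filter, Finset.mem_erase]; exact ⟨⟨hpq.symm, hq⟩, hn⟩, rfl⟩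
    · intro p hp
      simp only [diags, Finset.coe_filter, Finset.mem_offDiag, Set.mem_ofPred_eq] at hp
      exact hp.1.1
  rw [h2]
  have := Finset.card_nsmul_le_sum P _ _ h1
  rwa [hP.1, smul_eq_mul] at this

theorem stmt11 (k : ℕ) (hk : 4 ≤ k) (n : ℕ) (S : Finset E3) (hS : S.card = n)
    (T : Finset (Finset E3)) (hT : ∀ P ∈ T, IsKGonOn k S P)
    (hInt : ∀ P ∈ T, ∀ Q ∈ T, P ≠ Q → ¬ IntersectBadly P Q) :
    (∀ P ∈ T, ∀ Q ∈ T, P ≠ Q → ¬ ShareDiagonal P Q) ∧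
    (T.card : ℝ) ≤ (n.choose 2 : ℝ) / ((k : ℝ) * ((k : ℝ) - 3) / 2) := by
  have hns : ∀ P ∈ T, ∀ Q ∈ T, P ≠ Q → ¬ ShareDiagonal P Q :=
    fun P hP Q hQ hne => no_share (hInt P hP Q hQ hne)
  refine ⟨hns, ?_⟩
  have hdisj : (T : Set (Finset E3)).PairwiseDisjoint diags := by
    intro P hP Q hQ hne
    rw [Function.onFun, Finset.disjoint_left]
    rintro ⟨u, v⟩ h1 h2
    simp only [diags, Finset.mem_filter, Finset.mem_offDiag] at h1 h2
    exact hns P hP Q hQ hne ⟨u, v, h1.1.2.2, h1.1.1, h1.1.2.1, h2.1.1, h2.1.2.1, h1.2, h2.2⟩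
  have hsub : T.biUnion diags ⊆ S.offDiag := by
    rintro ⟨u, v⟩ h
    simp only [diags, Finset.mem_biUnion, Finset.mem_filter, Finset.mem_offDiag] at h ⊢
    obtain ⟨P, hP, ⟨h1, h2, h3⟩, -⟩ := h
    exact ⟨(hT P hP).1 h1, (hT P hP).1 h2, h3⟩
  have hle := Finset.card_le_card hsub
  rw [Finset.card_biUnion hdisj, Finset.offDiag_card, hS] at hle
  have hge := Finset.card_nsmul_le_sum T _ _ (fun P hP => card_diags hk (hT P hP).2)
  have htot : T.card * (k * (k - 3)) ≤ n * n - n := by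
    have := hge.trans hle
    rwa [smul_eq_mul] at this
  have hk3 : ((k - 3 : ℕ) : ℝ) = (k : ℝ) - 3 := by
    rw [Nat.cast_sub (by omega)]; norm_num
  have hR : (T.card : ℝ) * (k * ((k : ℝ) - 3)) ≤ n * n - n := by
    have : ((T.card * (k * (k - 3)) : ℕ) : ℝ) ≤ ((n * n - n : ℕ) : ℝ) := by exact_mod_cast htot
    rw [Nat.cast_sub (Nat.le_mul_self n)] at this
    push_cast at this
    rwa [hk3] at this
  have hk4 : (4 : ℝ) ≤ k := by exact_mod_cast hk
  rw [Nat.cast_choose_two, le_div_iff₀ (by nlinarith)]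
  linarith
end
end
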